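/- arXiv:1911.01689 — 4 statements merged into one kernel-verified Lean document; each statement's English description precedes it below -/
import Mathlib

section
/- There exists an absolute constant K < ∞ such that the following holds: for all C*-algebras A and B with A unital, every ε ≥ 0, every self-adjoint bounded linear ε-order zero map ψ : A → B with h := ψ(1_A), and every x ∈ A, one has dist(ψ(x), closure{h·b·h : b ∈ B}) ≤ K‖ψ‖^{3/5}ε^{1/5}‖x‖. -/
/-- `ψ` is an ε-order zero map: `‖ψ(x)ψ(y)‖ ≤ ε‖x‖‖y‖` for all positive `x, y` with `xy = 0`. -/
def IsEpsOrderZero {A B : Type*} [NonUnitalCStarAlgebra A] [PartialOrder A] [StarOrderedRing A]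
    [NonUnitalCStarAlgebra B] (ε : ℝ) (ψ : A →L[ℂ] B) : Prop :=
  ∀ x y : A, 0 ≤ x → 0 ≤ y → x * y = 0 → ‖ψ x * ψ y‖ ≤ ε * ‖x‖ * ‖y‖

/-- The layer function `t ↦ clamp (n t - k)`. -/
noncomputable def layerFn (n k : ℕ) (t : ℝ) : ℝ := max 0 (min 1 (n * t - k))

lemma layerFn_cont (n k : ℕ) : Continuous (layerFn n k) := by
  unfold layerFn; fun_prop

lemma layerFn_nonneg (n k : ℕ) (t : ℝ) : 0 ≤ layerFn n k t := le_max_left _ _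

lemma layerFn_le_one (n k : ℕ) (t : ℝ) : layerFn n k t ≤ 1 :=
  max_le zero_le_one (min_le_left _ _)

lemma layerFn_mul (n j k : ℕ) (hjk : j < k) (t : ℝ) :
    (1 - layerFn n j t) * layerFn n k t = 0 := by
  have h1 : (j : ℝ) + 1 ≤ k := by exact_mod_cast hjk
  rcases le_total ((n : ℝ) * t - k) 0 with h | h
  · have : layerFn n k t = 0 := by
      unfold layerFn
      rw [max_eq_left]
      exact (min_le_right _ _).trans h
    rw [this, mul_zero]
  · have : layerFn n j t = 1 := by
      unfold layerFn
      rw [min_eq_left (by linarith), max_eq_right zero_le_one]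
    rw [this, sub_self, zero_mul]

lemma layerFn_sum (n m : ℕ) (t : ℝ) (ht : 0 ≤ t) :
    ∑ k ∈ Finset.range m, layerFn n k t = min (n * t) m := by
  have hnt : 0 ≤ (n : ℝ) * t := by positivity
  induction m with
  | zero => simp [hnt]
  | succ m ih =>
    rw [Finset.sum_range_succ, ih]
    unfold layerFn
    push_cast
    rcases le_total ((n : ℝ) * t) m with h | h
    · have h' : min 1 ((n : ℝ) * t - m) ≤ 0 := (min_le_right _ _).trans (by linarith)
      have h'' : (n : ℝ) * t ≤ m + 1 := by linarith
      rw [min_eq_left h, max_eq_left h', min_eq_left h'', add_zero]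
    · rw [min_eq_right h]
      rcases le_total ((n : ℝ) * t) (m + 1) with h' | h'
      · rw [min_eq_left h', min_eq_right (by linarith), max_eq_right (by linarith)]; ring
      · rw [min_eq_right h', min_eq_left (by linarith), max_eq_right zero_le_one]

section
variable {A B : Type} [CStarAlgebra A] [PartialOrder A] [StarOrderedRing A]
  [NonUnitalCStarAlgebra B]

lemma exists_layers (x : A) (hx : 0 ≤ x) (hx1 : ‖x‖ ≤ 1) (n : ℕ) :
    ∃ y : ℕ → A, (∀ k, 0 ≤ y k) ∧ (∀ k, ‖y k‖ ≤ 1) ∧ (∀ k, 0 ≤ 1 - y k) ∧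
      (∀ k, ‖1 - y k‖ ≤ 1) ∧ (∀ j k, j < k → (1 - y j) * y k = 0) ∧
      (∀ j k, j < k → y k * (1 - y j) = 0) ∧
      ∑ k ∈ Finset.range n, y k = (n : ℝ) • x := by
  have hsa : IsSelfAdjoint x := .of_nonneg hx
  have hc : ∀ k, ContinuousOn (layerFn n k) (spectrum ℝ x) :=
    fun k => (layerFn_cont n k).continuousOn
  have h1 : ∀ k, 1 - cfc (layerFn n k) x = cfc (fun t => 1 - layerFn n k t) x := by
    intro k
    rw [cfc_sub _ _ x (by fun_prop) (hc k), cfc_const_one ℝ x]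
  have hc1 : ∀ k, ContinuousOn (fun t => 1 - layerFn n k t) (spectrum ℝ x) :=
    fun k => (continuous_const.sub (layerFn_cont n k)).continuousOn
  refine ⟨fun k => cfc (layerFn n k) x, ?_, ?_, ?_, ?_, ?_, ?_, ?_⟩
  · exact fun k => cfc_nonneg fun t _ => layerFn_nonneg n k t
  · refine fun k => norm_cfc_le zero_le_one fun t _ => ?_
    rw [Real.norm_of_nonneg (layerFn_nonneg n k t)]
    exact layerFn_le_one n k t
  · intro k
    simp only [h1]
    exact cfc_nonneg fun t _ => sub_nonneg.2 (layerFn_le_one n k t)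
  · intro k
    simp only [h1]
    refine norm_cfc_le zero_le_one fun t _ => ?_
    rw [Real.norm_of_nonneg (sub_nonneg.2 (layerFn_le_one n k t))]
    linarith [layerFn_nonneg n k t]
  · intro j k hjk
    simp only [h1]
    rw [← cfc_mul _ _ x (hc1 j) (hc k)]
    simp [layerFn_mul n j k hjk]
  · intro j k hjk
    simp only [h1]
    rw [← cfc_mul _ _ x (hc k) (hc1 j)]
    simp only [mul_comm (layerFn n k _), layerFn_mul n j k hjk]
    simp
  · simp only
    rw [← cfc_sum _ _ _ (fun k _ => hc k), ← cfc_const_mul_id (n : ℝ) x]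
    refine cfc_congr fun t ht => ?_
    have ht0 : 0 ≤ t := spectrum_nonneg_of_nonneg hx ht
    have ht1 : t ≤ 1 := by
      have := spectrum.norm_le_norm_mul_of_mem ht
      rcases subsingleton_or_nontrivial A with hs | hs
      · simp at ht
      · rw [Real.norm_of_nonneg ht0, norm_one, mul_one] at this
        linarith
    have := layerFn_sum n n t ht0
    simp only [Finset.sum_apply]
    rw [this, min_eq_left]
    nlinarith [(Nat.cast_nonneg n : (0 : ℝ) ≤ n)]

lemma sq_approx (ε : ℝ) (hε : 0 ≤ ε) (ψ : A →L[ℂ] B) (hψ : IsEpsOrderZero ε ψ)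
    (x : A) (hx : 0 ≤ x) (hx1 : ‖x‖ ≤ 1) (n : ℕ) (hn : 0 < n) :
    ∃ b c : B, ‖b‖ ≤ ‖ψ‖ ∧ ‖c‖ ≤ ‖ψ‖ ∧
      ‖ψ x * ψ x - (ψ 1 * b + c * ψ 1)‖ ≤ ε + ‖ψ‖ ^ 2 / n := by
  obtain ⟨y, y0, y1, z0, z1, hzy, hyz, hsum⟩ := exists_layers x hx hx1 n
  have hn' : (0 : ℝ) < n := by exact_mod_cast hn
  have hψy : ∀ k, ‖ψ (y k)‖ ≤ ‖ψ‖ := fun k =>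
    (ψ.le_opNorm _).trans (mul_le_of_le_one_right (norm_nonneg _) (y1 k))
  set s : B := ∑ k ∈ Finset.range n, ψ (y k) with hs
  have hsx : s = (n : ℝ) • ψ x := by
    rw [hs, ← map_sum, hsum]
    have : ((n : ℝ) • x : A) = ((n : ℂ) • x) := by
      rw [← Complex.coe_smul]; simp
    rw [this, map_smul, ← Complex.coe_smul]; simp
  set b : B := ∑ j ∈ Finset.range n, ∑ k ∈ Finset.range n, if j < k then ψ (y k) else 0 with hb
  set c : B := ∑ j ∈ Finset.range n, ∑ k ∈ Finset.range n, if k < j then ψ (y j) else 0 with hc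
  have key : ‖s * s - (ψ 1 * b + c * ψ 1)‖ ≤ n ^ 2 * ε + n * ‖ψ‖ ^ 2 := by
    have e1 : s * s - (ψ 1 * b + c * ψ 1) = ∑ j ∈ Finset.range n, ∑ k ∈ Finset.range n,
        (ψ (y j) * ψ (y k) - (ψ 1 * (if j < k then ψ (y k) else 0)
          + (if k < j then ψ (y j) else 0) * ψ 1)) := by
      simp only [Finset.sum_sub_distrib, Finset.sum_add_distrib, hb, hc, hs, Finset.mul_sum,
        Finset.sum_mul]
      congr 1
      rw [Finset.sum_comm]
    have e2 : ∀ j k, ‖ψ (y j) * ψ (y k) - (ψ 1 * (if j < k then ψ (y k) else 0)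
          + (if k < j then ψ (y j) else 0) * ψ 1)‖ ≤ ε + (if j = k then ‖ψ‖ ^ 2 else 0) := by
      intro j k
      have bd : ∀ p q : A, ‖p‖ ≤ 1 → ‖q‖ ≤ 1 → ε * ‖p‖ * ‖q‖ ≤ ε := fun p q hp hq =>
        (mul_le_of_le_one_right (by positivity) hq).trans (mul_le_of_le_one_right hε hp)
      rcases lt_trichotomy j k with h | h | h
      · have := (hψ _ _ (z0 j) (y0 k) (hzy j k h)).trans (bd _ _ (z1 j) (y1 k))
        simp only [h, h.not_gt, h.ne, if_true, if_false, zero_mul, add_zero]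
        rw [map_sub, sub_mul, norm_sub_rev] at this
        exact this
      · subst h
        simp only [lt_irrefl, if_false, if_true, mul_zero, zero_mul, add_zero, sub_zero]
        have : ‖ψ (y j) * ψ (y j)‖ ≤ ‖ψ‖ * ‖ψ‖ :=
          (norm_mul_le _ _).trans (mul_le_mul (hψy j) (hψy j) (norm_nonneg _) (norm_nonneg _))
        nlinarith
      · have := (hψ _ _ (y0 j) (z0 k) (hyz k j h)).trans (bd _ _ (y1 j) (z1 k))
        simp only [h, h.not_gt, h.ne', if_true, if_false, mul_zero, add_zero, zero_add]
        rw [map_sub, mul_sub, norm_sub_rev] at this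
        exact this
    rw [e1]
    calc _ ≤ ∑ j ∈ Finset.range n, ∑ k ∈ Finset.range n,
          (ε + (if j = k then ‖ψ‖ ^ 2 else 0)) :=
          norm_sum_le_of_le _ fun j _ => norm_sum_le_of_le _ fun k _ => e2 j k
      _ = n ^ 2 * ε + n * ‖ψ‖ ^ 2 := by
          simp only [Finset.sum_add_distrib, Finset.sum_ite_eq, Finset.sum_const,
            Finset.card_range, nsmul_eq_mul]
          rw [Finset.sum_congr rfl (g := fun _ => ‖ψ‖ ^ 2)
            (fun j hj => by rw [if_pos hj])]
          simp; ring
  have hbn : ‖b‖ ≤ n ^ 2 * ‖ψ‖ := by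
    calc _ ≤ ∑ j ∈ Finset.range n, ∑ k ∈ Finset.range n, ‖ψ‖ :=
          norm_sum_le_of_le _ fun j _ => norm_sum_le_of_le _ fun k _ => by
            split_ifs
            · exact hψy k
            · simp
      _ = _ := by simp; ring
  have hcn : ‖c‖ ≤ n ^ 2 * ‖ψ‖ := by
    calc _ ≤ ∑ j ∈ Finset.range n, ∑ k ∈ Finset.range n, ‖ψ‖ :=
          norm_sum_le_of_le _ fun j _ => norm_sum_le_of_le _ fun k _ => by
            split_ifs
            · exact hψy j
            · simp
      _ = _ := by simp; ring
  have hr : ‖((n : ℝ) ^ 2)⁻¹‖ = ((n : ℝ) ^ 2)⁻¹ := Real.norm_of_nonneg (by positivity)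
  refine ⟨((n : ℝ) ^ 2)⁻¹ • b, ((n : ℝ) ^ 2)⁻¹ • c, ?_, ?_, ?_⟩
  · rw [norm_smul, hr, inv_mul_le_iff₀ (by positivity)]; exact hbn
  · rw [norm_smul, hr, inv_mul_le_iff₀ (by positivity)]; exact hcn
  · have e : ψ x * ψ x - (ψ 1 * (((n : ℝ) ^ 2)⁻¹ • b) + (((n : ℝ) ^ 2)⁻¹ • c) * ψ 1)
        = ((n : ℝ) ^ 2)⁻¹ • (s * s - (ψ 1 * b + c * ψ 1)) := by
      rw [hsx, smul_sub, smul_add, mul_smul_comm, smul_mul_assoc, smul_mul_assoc, mul_smul_comm,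
        smul_smul, smul_smul]
      congr 1
      rw [show ((n : ℝ) ^ 2)⁻¹ * (n : ℝ) * n = 1 by field_simp, one_smul]
    rw [e, norm_smul, hr, inv_mul_le_iff₀ (by positivity)]
    refine key.trans (le_of_eq ?_)
    field_simp

lemma exists_cutoff (h : B) (hh : IsSelfAdjoint h) (δ : ℝ) (hδ : 0 < δ) :
    ∃ k g : B, g = h * k ∧ g = k * h ∧ IsSelfAdjoint g ∧ ‖g‖ ≤ 1 ∧ ‖h - g * h‖ ≤ δ ∧
      ‖h - h * g‖ ≤ δ := by
  set f : ℝ → ℝ := fun t => t / (t ^ 2 + δ ^ 2) with hf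
  have hpos : ∀ t : ℝ, 0 < t ^ 2 + δ ^ 2 := fun t => by positivity
  have hfc : Continuous f := by
    refine Continuous.div (by fun_prop) (by fun_prop) fun t => (hpos t).ne'
  have hf0 : f 0 = 0 := by simp [hf]
  have hid : cfcₙ (fun t : ℝ => t) h = h := cfcₙ_id' ℝ h
  have e1 : h * cfcₙ f h = cfcₙ (fun t => t * f t) h := by
    rw [cfcₙ_mul (fun t => t) f h (by fun_prop) rfl hfc.continuousOn hf0, hid]
  have e2 : cfcₙ f h * h = cfcₙ (fun t => t * f t) h := by
    simp only [mul_comm _ (f _)]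
    rw [cfcₙ_mul f (fun t => t) h hfc.continuousOn hf0 (by fun_prop) rfl, hid]
  have hgc : Continuous (fun t => t * f t) := continuous_id.mul hfc
  have e3 : h - h * cfcₙ (fun t => t * f t) h = cfcₙ (fun t => t - t * (t * f t)) h := by
    rw [cfcₙ_sub (fun t => t) (fun t => t * (t * f t)) h (by fun_prop) rfl
      (continuous_id.mul hgc).continuousOn (by simp),
      cfcₙ_mul (fun t => t) (fun t => t * f t) h (by fun_prop) rfl hgc.continuousOn (by simp), hid]
  have e4 : cfcₙ (fun t => t * f t) h * h = h * cfcₙ (fun t => t * f t) h := by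
    rw [← e1]
    rw [mul_assoc, e2, e1]
  have e5 : ‖h - h * cfcₙ (fun t => t * f t) h‖ ≤ δ := by
    rw [e3]
    refine norm_cfcₙ_le fun t _ => ?_
    have : t - t * (t * f t) = t * δ ^ 2 / (t ^ 2 + δ ^ 2) := by
      simp only [hf]
      have := (hpos t).ne'
      field_simp
      ring
    rw [this, Real.norm_eq_abs, abs_le, le_div_iff₀ (hpos t), div_le_iff₀ (hpos t)]
    constructor <;> nlinarith [mul_nonneg hδ.le (sq_nonneg (t - δ)),
      mul_nonneg hδ.le (sq_nonneg (t + δ)), mul_nonneg hδ.le (sq_nonneg t), pow_pos hδ 3]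
  refine ⟨cfcₙ f h, cfcₙ (fun t => t * f t) h, e1.symm, e2.symm, cfcₙ_predicate _ _, ?_, ?_, e5⟩
  · refine norm_cfcₙ_le fun t _ => ?_
    have : t * f t = t ^ 2 / (t ^ 2 + δ ^ 2) := by simp only [hf]; ring
    rw [this, Real.norm_of_nonneg (by positivity), div_le_one (hpos t)]
    nlinarith
  · rw [e4]; exact e5

lemma compress_bound (h a b c g : B) (ha : IsSelfAdjoint a) (hg : IsSelfAdjoint g)
    (hg1 : ‖g‖ ≤ 1) (δ M η : ℝ) (hδ : 0 ≤ δ)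
    (h1 : ‖h - g * h‖ ≤ δ) (h2 : ‖h - h * g‖ ≤ δ) (hb : ‖b‖ ≤ M) (hc : ‖c‖ ≤ M)
    (hab : ‖a * a - (h * b + c * h)‖ ≤ η) :
    ‖a - g * a * g‖ ≤ 2 * √(4 * η + 4 * (δ * M)) := by
  have hM : 0 ≤ M := (norm_nonneg _).trans hb
  have nl : ∀ z : B, ‖z - g * z‖ ≤ 2 * ‖z‖ := fun z => by
    have := norm_sub_le z (g * z)
    have h3 : ‖g * z‖ ≤ ‖z‖ :=
      (norm_mul_le _ _).trans (mul_le_of_le_one_left (norm_nonneg _) hg1)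
    linarith
  have nr : ∀ z : B, ‖z - z * g‖ ≤ 2 * ‖z‖ := fun z => by
    have := norm_sub_le z (z * g)
    have h3 : ‖z * g‖ ≤ ‖z‖ :=
      (norm_mul_le _ _).trans (mul_le_of_le_one_right (norm_nonneg _) hg1)
    linarith
  have hsq : ‖a - a * g‖ ^ 2 ≤ 4 * η + 4 * (δ * M) := by
    rw [sq, ← CStarRing.norm_star_mul_self]
    set r := a * a - (h * b + c * h) with hr
    have e : star (a - a * g) * (a - a * g)
        = ((r - g * r) - (r - g * r) * g) + ((h - g * h) * b - (h - g * h) * b * g)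
          + (c * (h - h * g) - g * (c * (h - h * g))) := by
      rw [star_sub, star_mul, ha.star_eq, hg.star_eq, hr]
      noncomm_ring
    rw [e]
    refine (norm_add_le _ _).trans ?_
    have n1 : ‖(r - g * r) - (r - g * r) * g‖ ≤ 4 * η := by
      linarith [nr (r - g * r), nl r]
    have n2 : ‖(h - g * h) * b - (h - g * h) * b * g‖ ≤ 2 * (δ * M) := by
      have : ‖(h - g * h) * b‖ ≤ δ * M :=
        (norm_mul_le _ _).trans (mul_le_mul h1 hb (norm_nonneg _) hδ)
      linarith [nr ((h - g * h) * b)]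
    have n3 : ‖c * (h - h * g) - g * (c * (h - h * g))‖ ≤ 2 * (δ * M) := by
      have : ‖c * (h - h * g)‖ ≤ M * δ :=
        (norm_mul_le _ _).trans (mul_le_mul hc h2 (norm_nonneg _) hM)
      linarith [nl (c * (h - h * g))]
    linarith [norm_add_le ((r - g * r) - (r - g * r) * g)
      ((h - g * h) * b - (h - g * h) * b * g)]
  have hs : ‖a - a * g‖ ≤ √(4 * η + 4 * (δ * M)) := Real.le_sqrt_of_sq_le hsq
  have hs' : ‖a - g * a‖ ≤ √(4 * η + 4 * (δ * M)) := by
    rw [← norm_star, star_sub, star_mul, ha.star_eq, hg.star_eq]; exact hs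
  have e : a - g * a * g = (a - g * a) + g * (a - a * g) := by noncomm_ring
  rw [e]
  have h3 : ‖g * (a - a * g)‖ ≤ ‖a - a * g‖ :=
    (norm_mul_le _ _).trans (mul_le_of_le_one_left (norm_nonneg _) hg1)
  linarith [norm_add_le (a - g * a) (g * (a - a * g))]

lemma pos_approx (ε : ℝ) (hε : 0 ≤ ε) (ψ : A →L[ℂ] B) (hψ : IsEpsOrderZero ε ψ)
    (hstar : ∀ x : A, ψ (star x) = star (ψ x)) (x : A) (hx : 0 ≤ x) (hx1 : ‖x‖ ≤ 1)
    (τ : ℝ) (hτ : 0 < τ) :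
    ∃ b : B, ‖ψ x - ψ 1 * b * ψ 1‖ ≤ 4 * √(ε + τ) := by
  have sa : IsSelfAdjoint (ψ x) := by
    rw [IsSelfAdjoint, ← hstar, (IsSelfAdjoint.of_nonneg hx).star_eq]
  have sh : IsSelfAdjoint (ψ 1) := by
    rw [IsSelfAdjoint, ← hstar, star_one]
  obtain ⟨n, hn⟩ := exists_nat_gt (‖ψ‖ ^ 2 / (τ / 2))
  have hn' : (0 : ℝ) < n := lt_of_le_of_lt (by positivity) hn
  obtain ⟨b, c, hb, hc, hbc⟩ := sq_approx ε hε ψ hψ x hx hx1 n (by exact_mod_cast hn')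
  set δ : ℝ := τ / 2 / (‖ψ‖ + 1) with hδ
  have hδ0 : 0 < δ := by positivity
  obtain ⟨k, g, e1, e2, hg, hg1, h1, h2⟩ := exists_cutoff (ψ 1) sh δ hδ0
  have := compress_bound (ψ 1) (ψ x) b c g sa hg hg1 δ ‖ψ‖ _ hδ0.le h1 h2 hb hc hbc
  refine ⟨k * ψ x * k, ?_⟩
  have e : ψ 1 * (k * ψ x * k) * ψ 1 = g * ψ x * g := by
    nth_rewrite 1 [e1]
    rw [e2]
    simp only [mul_assoc]
  rw [e]
  refine this.trans ?_
  have hδψ : δ * ‖ψ‖ ≤ τ / 2 := by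
    rw [hδ, div_mul_eq_mul_div, div_le_iff₀ (by positivity)]
    nlinarith [norm_nonneg ψ]
  have hnψ : ‖ψ‖ ^ 2 / n ≤ τ / 2 := by
    rw [div_lt_iff₀ (by positivity)] at hn
    rw [div_le_iff₀ hn']
    linarith
  have : √(4 * (ε + ‖ψ‖ ^ 2 / n) + 4 * (δ * ‖ψ‖)) ≤ √(2 ^ 2 * (ε + τ)) :=
    Real.sqrt_le_sqrt (by linarith)
  rw [Real.sqrt_mul (by positivity), Real.sqrt_sq (by norm_num)] at this
  linarith

lemma gen_approx (ε : ℝ) (hε : 0 ≤ ε) (ψ : A →L[ℂ] B) (hψ : IsEpsOrderZero ε ψ)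
    (hstar : ∀ x : A, ψ (star x) = star (ψ x)) (x : A) (hx1 : ‖x‖ ≤ 1)
    (τ : ℝ) (hτ : 0 < τ) :
    ∃ b : B, ‖ψ x - ψ 1 * b * ψ 1‖ ≤ 16 * √(ε + τ) := by
  obtain ⟨p, hp0, hp1, hp⟩ := CStarAlgebra.exists_sum_four_nonneg x
  choose b hb using fun i => pos_approx ε hε ψ hψ hstar (p i) (hp0 i) ((hp1 i).trans hx1) τ hτ
  refine ⟨∑ i : Fin 4, Complex.I ^ (i : ℕ) • b i, ?_⟩
  have e : ψ x - ψ 1 * (∑ i : Fin 4, Complex.I ^ (i : ℕ) • b i) * ψ 1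
      = ∑ i : Fin 4, Complex.I ^ (i : ℕ) • (ψ (p i) - ψ 1 * b i * ψ 1) := by
    conv_lhs => rw [hp]
    simp only [map_sum, map_smul, Finset.mul_sum, Finset.sum_mul, smul_sub,
      Finset.sum_sub_distrib, mul_smul_comm, smul_mul_assoc]
  rw [e]
  calc _ ≤ ∑ i : Fin 4, 4 * √(ε + τ) := norm_sum_le_of_le _ fun i _ => by
        rw [norm_smul, norm_pow, Complex.norm_I, one_pow, one_mul]; exact hb i
    _ = _ := by simp; ring

lemma dist_bound (ε : ℝ) (hε : 0 ≤ ε) (ψ : A →L[ℂ] B) (hψ : IsEpsOrderZero ε ψ)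
    (hstar : ∀ x : A, ψ (star x) = star (ψ x)) (x : A) :
    Metric.infDist (ψ x) (closure {y : B | ∃ b : B, y = ψ 1 * b * ψ 1}) ≤ 16 * √ε * ‖x‖ := by
  rw [Metric.infDist_closure]
  have key : ∀ τ : ℝ, 0 < τ →
      Metric.infDist (ψ x) {y : B | ∃ b : B, y = ψ 1 * b * ψ 1} ≤ 16 * √(ε + τ) * ‖x‖ := by
    intro τ hτ
    rcases eq_or_ne x 0 with rfl | hx
    · have : (0 : B) ∈ {y : B | ∃ b : B, y = ψ 1 * b * ψ 1} := ⟨0, by simp⟩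
      have := Metric.infDist_le_dist_of_mem (x := ψ 0) this
      simpa using this
    have hx0 : 0 < ‖x‖ := norm_pos_iff.2 hx
    have hxc : (‖x‖ : ℂ) ≠ 0 := by exact_mod_cast hx0.ne'
    obtain ⟨b, hb⟩ := gen_approx ε hε ψ hψ hstar ((‖x‖ : ℂ)⁻¹ • x)
      (by rw [norm_smul]; simp [hx0.ne']) τ hτ
    have hm : ψ 1 * ((‖x‖ : ℂ) • b) * ψ 1 ∈ {y : B | ∃ b : B, y = ψ 1 * b * ψ 1} := ⟨_, rfl⟩
    refine (Metric.infDist_le_dist_of_mem hm).trans ?_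
    have e : ψ x - ψ 1 * ((‖x‖ : ℂ) • b) * ψ 1
        = (‖x‖ : ℂ) • (ψ ((‖x‖ : ℂ)⁻¹ • x) - ψ 1 * b * ψ 1) := by
      rw [map_smul, smul_sub, smul_smul, mul_inv_cancel₀ hxc, one_smul, mul_smul_comm,
        smul_mul_assoc]
    rw [dist_eq_norm, e, norm_smul, Complex.norm_real, norm_norm,
      mul_comm]
    gcongr
  have hlim : Filter.Tendsto (fun τ : ℝ => 16 * √(ε + τ) * ‖x‖) (nhdsWithin 0 (Set.Ioi 0))
      (nhds (16 * √(ε + 0) * ‖x‖)) := by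
    have : Continuous (fun τ : ℝ => 16 * √(ε + τ) * ‖x‖) := by fun_prop
    exact (this.tendsto 0).mono_left nhdsWithin_le_nhds
  rw [add_zero] at hlim
  exact ge_of_tendsto hlim (Filter.eventually_of_mem self_mem_nhdsWithin fun τ hτ => key τ hτ)

end

/-- There is an absolute constant `K` such that for every self-adjoint
ε-order zero map `ψ` on a unital C*-algebra, with `h := ψ(1)`, the range of `ψ` lies close to
the hereditary subalgebra `closure(hBh)`:
`dist(ψ(x), closure{hbh : b ∈ B}) ≤ K‖ψ‖^{3/5}ε^{1/5}‖x‖` for every `x`. -/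
theorem stmt_12 :
    ∃ K : ℝ, ∀ (A B : Type) (_ : CStarAlgebra A) (_ : PartialOrder A) (_ : StarOrderedRing A)
      (_ : NonUnitalCStarAlgebra B) (ε : ℝ), 0 ≤ ε →
      ∀ ψ : A →L[ℂ] B, IsEpsOrderZero ε ψ → (∀ x : A, ψ (star x) = star (ψ x)) →
      ∀ h : B, h = ψ 1 →
      ∀ x : A,
        Metric.infDist (ψ x) (closure {y : B | ∃ b : B, y = h * b * h}) ≤
          K * ‖ψ‖ ^ ((3 : ℝ) / 5) * ε ^ ((1 : ℝ) / 5) * ‖x‖ := by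
  refine ⟨16, ?_⟩
  intro A B _ _ _ _ ε hε ψ hψ hstar h hh x
  subst hh
  rcases le_total ε (‖ψ‖ ^ 2) with hle | hle
  · refine (dist_bound ε hε ψ hψ hstar x).trans ?_
    have e : √ε = ε ^ ((3 : ℝ) / 10) * ε ^ ((1 : ℝ) / 5) := by
      rw [← Real.rpow_add_of_nonneg hε (by norm_num) (by norm_num), Real.sqrt_eq_rpow]
      norm_num
    have e2 : ε ^ ((3 : ℝ) / 10) ≤ ‖ψ‖ ^ ((3 : ℝ) / 5) := by
      calc ε ^ ((3 : ℝ) / 10) ≤ (‖ψ‖ ^ 2) ^ ((3 : ℝ) / 10) :=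
            Real.rpow_le_rpow hε hle (by norm_num)
        _ = _ := by
          rw [← Real.rpow_natCast, ← Real.rpow_mul (norm_nonneg _)]
          norm_num
    rw [e, ← mul_assoc (16 : ℝ)]
    gcongr
  · have hz : (0 : B) ∈ closure {y : B | ∃ b : B, y = ψ 1 * b * ψ 1} :=
      subset_closure ⟨0, by simp⟩
    refine (Metric.infDist_le_dist_of_mem hz).trans ?_
    rw [dist_zero_right]
    refine (ψ.le_opNorm x).trans ?_
    have e : ‖ψ‖ = ‖ψ‖ ^ ((3 : ℝ) / 5) * ‖ψ‖ ^ ((2 : ℝ) / 5) := by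
      rw [← Real.rpow_add_of_nonneg (norm_nonneg _) (by norm_num) (by norm_num)]
      norm_num
    have e2 : ‖ψ‖ ^ ((2 : ℝ) / 5) ≤ ε ^ ((1 : ℝ) / 5) := by
      calc ‖ψ‖ ^ ((2 : ℝ) / 5) = (‖ψ‖ ^ 2) ^ ((1 : ℝ) / 5) := by
            rw [← Real.rpow_natCast, ← Real.rpow_mul (norm_nonneg _)]
            norm_num
        _ ≤ _ := Real.rpow_le_rpow (by positivity) hle (by norm_num)
    have e3 : ‖ψ‖ ≤ ‖ψ‖ ^ ((3 : ℝ) / 5) * ε ^ ((1 : ℝ) / 5) := by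
      calc ‖ψ‖ = ‖ψ‖ ^ ((3 : ℝ) / 5) * ‖ψ‖ ^ ((2 : ℝ) / 5) := e
        _ ≤ _ := by gcongr
    have e4 : 0 ≤ ‖ψ‖ ^ ((3 : ℝ) / 5) * ε ^ ((1 : ℝ) / 5) := by positivity
    rw [mul_assoc (16 : ℝ)]
    gcongr
    linarith
end

section
/- There exists an absolute constant K < ∞ such that the following holds: for all C*-algebras A and B with A unital, every ε ≥ 0, every self-adjoint bounded linear ε-order zero map ψ : A → B with h := ψ(1_A), every real α with 0 < α < 1/10, and every x ∈ A, there exists u ∈ B such that ‖u‖ ≤ 2‖ψ‖^{1−2α}‖x‖ and ‖ψ(x) − u·(h²)^{α}‖ ≤ K‖ψ‖^{3/5}ε^{1/5}‖x‖. -/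
open scoped NNReal
open scoped unitInterval Topology
open MeasureTheory Filter
noncomputable def oz_c : ℝ := ∫ u in (0:ℝ)..1, √(1 - u) * √u

lemma oz_c_pos : 0 < oz_c := by
  unfold oz_c
  apply intervalIntegral.intervalIntegral_pos_of_pos_on
  · apply Continuous.intervalIntegrable; fun_prop
  · intro x hx
    have h1 : 0 < x := hx.1
    have h2 : 0 < 1 - x := by linarith [hx.2]
    positivity
  · norm_num

lemma oz_half (s r : ℝ) (hs : s ∈ I) (hr : r ∈ I) (h : r ≤ s) :
    ∫ t in (0:ℝ)..1, √(s - t) * √(t - r) = oz_c * (s - r) ^ 2 := by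
  have hi : ∀ a b : ℝ, IntervalIntegrable (fun t => √(s - t) * √(t - r)) volume a b := fun a b => by
    apply Continuous.intervalIntegrable; fun_prop
  rw [← intervalIntegral.integral_add_adjacent_intervals (hi 0 r) (hi r 1),
    ← intervalIntegral.integral_add_adjacent_intervals (hi r s) (hi s 1)]
  have e1 : ∫ t in (0:ℝ)..r, √(s - t) * √(t - r) = 0 := by
    rw [intervalIntegral.integral_congr (g := fun _ => (0:ℝ))]
    · simp
    · intro t ht
      rw [Set.uIcc_of_le hr.1] at ht
      have : √(t - r) = 0 := Real.sqrt_eq_zero_of_nonpos (by linarith [ht.2])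
      simp [this]
  have e2 : ∫ t in s..1, √(s - t) * √(t - r) = 0 := by
    rw [intervalIntegral.integral_congr (g := fun _ => (0:ℝ))]
    · simp
    · intro t ht
      rw [Set.uIcc_of_le hs.2] at ht
      have : √(s - t) = 0 := Real.sqrt_eq_zero_of_nonpos (by linarith [ht.1])
      simp [this]
  rw [e1, e2]
  have e3 := intervalIntegral.smul_integral_comp_add_mul (a := 0) (b := 1)
    (fun t => √(s - t) * √(t - r)) (s - r) r
  simp only [mul_zero, add_zero, mul_one, add_sub_cancel, smul_eq_mul] at e3
  rw [← e3, oz_c]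
  have e4 : ∀ u : ℝ, √(s - (r + (s - r) * u)) * √(r + (s - r) * u - r)
      = (s - r) * (√(1 - u) * √u) := by
    intro u
    have hsr : 0 ≤ s - r := by linarith
    rw [show s - (r + (s - r) * u) = (s - r) * (1 - u) by ring,
      show r + (s - r) * u - r = (s - r) * u by ring,
      Real.sqrt_mul hsr, Real.sqrt_mul hsr]
    calc _ = (√(s - r) * √(s - r)) * (√(1 - u) * √u) := by ring
      _ = _ := by rw [Real.mul_self_sqrt hsr]
  simp only [e4, intervalIntegral.integral_const_mul]
  ring

lemma oz_zero (s r t : ℝ) (h : s ≤ r) : √(s - t) * √(t - r) = 0 := by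
  rcases le_total s t with h1 | h1
  · rw [Real.sqrt_eq_zero_of_nonpos (by linarith), zero_mul]
  · rw [Real.sqrt_eq_zero_of_nonpos (x := t - r) (by linarith), mul_zero]

lemma oz_int (s r : ℝ) (hs : s ∈ I) (hr : r ∈ I) :
    ∫ t in (0:ℝ)..1, (√(s - t) * √(t - r) + √(t - s) * √(r - t)) = oz_c * (s - r) ^ 2 := by
  rcases le_total r s with h | h
  · rw [← oz_half s r hs hr h]
    congr 1; ext t
    rw [mul_comm (√(t - s)), oz_zero r s t h, add_zero]
  · rw [show (s - r) ^ 2 = (r - s) ^ 2 by ring, ← oz_half r s hr hs h]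
    congr 1; ext t
    rw [oz_zero s r t h, zero_add, mul_comm]

noncomputable def oz_a (t : ℝ) : C(I, ℝ) := ⟨fun s => √(s - t), by fun_prop⟩
noncomputable def oz_b (t : ℝ) : C(I, ℝ) := ⟨fun s => √(t - s), by fun_prop⟩
noncomputable def oz_X : C(I, ℝ) := ⟨fun s => (s : ℝ), by fun_prop⟩

section
set_option linter.unusedSectionVars false
variable {E : Type*} [NonUnitalNormedRing E] [NormedSpace ℝ E] [IsScalarTower ℝ E E]
    [SMulCommClass ℝ E E] [CompleteSpace E]

lemma oz_bern (φ : C(I, ℝ) →L[ℝ] E) (n : ℕ) (f : C(I, ℝ)) :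
    φ (bernsteinApproximation n f)
      = ∑ k : Fin (n + 1), f (bernstein.z k) • φ (bernstein n k) := by
  have : bernsteinApproximation n f
      = ∑ k : Fin (n + 1), f (bernstein.z k) • bernstein n k := by
    ext x
    simp [bernsteinApproximation.apply, mul_comm]
  rw [this, map_sum]; simp

lemma oz_bern2 (φ : C(I, ℝ) →L[ℝ] E) (n : ℕ) (f g : C(I, ℝ)) :
    φ (bernsteinApproximation n f) * φ (bernsteinApproximation n g)
      = ∑ k : Fin (n + 1), ∑ l : Fin (n + 1), (f (bernstein.z k) * g (bernstein.z l)) •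
        (φ (bernstein n k) * φ (bernstein n l)) := by
  rw [oz_bern, oz_bern, Finset.sum_mul_sum]
  refine Finset.sum_congr rfl fun k _ => Finset.sum_congr rfl fun l _ => ?_
  rw [smul_mul_assoc, mul_smul_comm, smul_smul]

lemma oz_bern_norm (n : ℕ) (f : C(I, ℝ)) (M : ℝ) (hM : ‖f‖ ≤ M) :
    ‖bernsteinApproximation n f‖ ≤ M := by
  have hM0 : 0 ≤ M := (norm_nonneg _).trans hM
  rw [ContinuousMap.norm_le _ hM0]
  intro x
  rw [bernsteinApproximation.apply]
  calc _ ≤ ∑ k : Fin (n + 1), bernstein n k x * M := by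
        refine (norm_sum_le _ _).trans (Finset.sum_le_sum fun k _ => ?_)
        rw [norm_smul, Real.norm_of_nonneg bernstein_nonneg]
        exact mul_le_mul_of_nonneg_left ((f.norm_coe_le_norm _).trans hM) bernstein_nonneg
    _ = M := by rw [← Finset.sum_mul, bernstein.probability, one_mul]

lemma oz_a_norm (t : ℝ) (ht : t ∈ I) : ‖oz_a t‖ ≤ 1 := by
  rw [ContinuousMap.norm_le _ zero_le_one]
  intro x
  have h1 := x.2.2
  have h2 := ht.1
  simp only [oz_a, ContinuousMap.coe_mk, Real.norm_of_nonneg (Real.sqrt_nonneg _)]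
  rw [Real.sqrt_le_iff]; constructor <;> linarith

lemma oz_b_norm (t : ℝ) (ht : t ∈ I) : ‖oz_b t‖ ≤ 1 := by
  rw [ContinuousMap.norm_le _ zero_le_one]
  intro x
  have h1 := x.2.1
  have h2 := ht.2
  simp only [oz_b, ContinuousMap.coe_mk, Real.norm_of_nonneg (Real.sqrt_nonneg _)]
  rw [Real.sqrt_le_iff]; constructor <;> linarith

/-- Integral form of the identity after Bernstein approximation. -/
lemma oz_int_bern (φ : C(I, ℝ) →L[ℝ] E) (n : ℕ) :
    ∫ t in (0:ℝ)..1, (φ (bernsteinApproximation n (oz_a t)) * φ (bernsteinApproximation n (oz_b t))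
      + φ (bernsteinApproximation n (oz_b t)) * φ (bernsteinApproximation n (oz_a t)))
    = oz_c • (φ (bernsteinApproximation n (oz_X ^ 2)) * φ (bernsteinApproximation n 1)
      - (2 : ℝ) • (φ (bernsteinApproximation n oz_X) * φ (bernsteinApproximation n oz_X))
      + φ (bernsteinApproximation n 1) * φ (bernsteinApproximation n (oz_X ^ 2))) := by
  simp only [oz_bern2, ← Finset.sum_add_distrib, ← Finset.sum_sub_distrib, Finset.smul_sum,
    smul_smul, ← add_smul, ← sub_smul]
  rw [intervalIntegral.integral_finsetSum]
  · refine Finset.sum_congr rfl fun k _ => ?_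
    rw [intervalIntegral.integral_finsetSum]
    · refine Finset.sum_congr rfl fun l _ => ?_
      rw [intervalIntegral.integral_smul_const]
      congr 1
      have := oz_int (bernstein.z k) (bernstein.z l) (bernstein.z k).2 (bernstein.z l).2
      simp only [oz_a, oz_b, oz_X, ContinuousMap.coe_mk, ContinuousMap.pow_apply,
        ContinuousMap.one_apply]
      rw [this]; ring
    · intro l _
      apply Continuous.intervalIntegrable
      simp only [oz_a, oz_b, ContinuousMap.coe_mk]
      fun_prop
  · intro k _
    apply Continuous.intervalIntegrable
    simp only [oz_a, oz_b, ContinuousMap.coe_mk]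
    fun_prop

lemma oz_comm (φ : C(I, ℝ) →L[ℝ] E) (ε : ℝ) 
    (hφ : ∀ f g : C(I, ℝ), 0 ≤ f → 0 ≤ g → f * g = 0 → ‖φ f * φ g‖ ≤ ε * ‖f‖ * ‖g‖)
    (hε : 0 ≤ ε) :
    ‖φ (oz_X ^ 2) * φ 1 - (2 : ℝ) • (φ oz_X * φ oz_X) + φ 1 * φ (oz_X ^ 2)‖ ≤ 2 * ε / oz_c := by
  have hB : ∀ f, Tendsto (fun n => φ (bernsteinApproximation n f)) atTop (𝓝 (φ f)) := fun f =>
    (φ.continuous.tendsto f).comp (bernsteinApproximation_uniform f)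
  set D := φ (oz_X ^ 2) * φ 1 - (2 : ℝ) • (φ oz_X * φ oz_X) + φ 1 * φ (oz_X ^ 2) with hD
  have lim1 : Tendsto (fun n => ∫ t in (0:ℝ)..1, 
      (φ (bernsteinApproximation n (oz_a t)) * φ (bernsteinApproximation n (oz_b t))
      + φ (bernsteinApproximation n (oz_b t)) * φ (bernsteinApproximation n (oz_a t))))
      atTop (𝓝 (oz_c • D)) := by
    simp only [oz_int_bern]
    exact ((((hB _).mul (hB _)).sub (((hB _).mul (hB _)).const_smul _)).add
      ((hB _).mul (hB _))).const_smul _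
  have lim2 : Tendsto (fun n => ∫ t in (0:ℝ)..1, 
      (φ (bernsteinApproximation n (oz_a t)) * φ (bernsteinApproximation n (oz_b t))
      + φ (bernsteinApproximation n (oz_b t)) * φ (bernsteinApproximation n (oz_a t))))
      atTop (𝓝 (∫ t in (0:ℝ)..1, (φ (oz_a t) * φ (oz_b t) + φ (oz_b t) * φ (oz_a t)))) := by
    apply intervalIntegral.tendsto_integral_filter_of_dominated_convergence
      (fun _ => ‖φ‖ * ‖φ‖ + ‖φ‖ * ‖φ‖)
    · refine Eventually.of_forall fun n => Continuous.aestronglyMeasurable ?_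
      simp only [oz_bern2, oz_a, oz_b, ContinuousMap.coe_mk]
      fun_prop
    · refine Eventually.of_forall fun n => Eventually.of_forall fun t ht => ?_
      rw [Set.uIoc_of_le zero_le_one] at ht
      have ht' : t ∈ I := ⟨ht.1.le, ht.2⟩
      have h1 : ‖φ (bernsteinApproximation n (oz_a t))‖ ≤ ‖φ‖ := by
        have := φ.le_of_opNorm_le le_rfl (bernsteinApproximation n (oz_a t))
        have h2 := oz_bern_norm n _ _ (oz_a_norm t ht')
        nlinarith [norm_nonneg φ]
      have h3 : ‖φ (bernsteinApproximation n (oz_b t))‖ ≤ ‖φ‖ := by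
        have := φ.le_of_opNorm_le le_rfl (bernsteinApproximation n (oz_b t))
        have h2 := oz_bern_norm n _ _ (oz_b_norm t ht')
        nlinarith [norm_nonneg φ]
      refine (norm_add_le _ _).trans (add_le_add ((norm_mul_le _ _).trans ?_)
        ((norm_mul_le _ _).trans ?_)) <;> gcongr
    · exact intervalIntegrable_const
    · refine Eventually.of_forall fun t ht => ?_
      exact ((hB _).mul (hB _)).add ((hB _).mul (hB _))
  have heq := tendsto_nhds_unique lim1 lim2
  have hbd : ‖∫ t in (0:ℝ)..1, (φ (oz_a t) * φ (oz_b t) + φ (oz_b t) * φ (oz_a t))‖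
      ≤ 2 * ε * |1 - 0| := by
    apply intervalIntegral.norm_integral_le_of_norm_le_const
    intro t ht
    rw [Set.uIoc_of_le zero_le_one] at ht
    have ht' : t ∈ I := ⟨ht.1.le, ht.2⟩
    have ha : (0 : C(I, ℝ)) ≤ oz_a t := fun s => Real.sqrt_nonneg _
    have hb : (0 : C(I, ℝ)) ≤ oz_b t := fun s => Real.sqrt_nonneg _
    have hab : oz_a t * oz_b t = 0 := by
      ext s
      exact oz_zero s s t le_rfl
    have h1 := hφ _ _ ha hb hab
    have h2 := hφ _ _ hb ha (by rw [mul_comm]; exact hab)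
    have h3 : ‖oz_a t‖ * ‖oz_b t‖ ≤ 1 :=
      mul_le_one₀ (oz_a_norm t ht') (norm_nonneg _) (oz_b_norm t ht')
    refine (norm_add_le _ _).trans ?_
    nlinarith
  rw [← heq, norm_smul, Real.norm_of_nonneg oz_c_pos.le] at hbd
  rw [le_div_iff₀ oz_c_pos]
  simp at hbd
  linarith
end

section
variable {A B : Type*} [CStarAlgebra A] [PartialOrder A] [StarOrderedRing A]
    [NonUnitalCStarAlgebra B]

lemma oz_exists_hom (y : A) (hy : IsSelfAdjoint y) (hsp : spectrum ℝ y ⊆ I) :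
    ∃ L : C(I, ℝ) →⋆ₐ[ℝ] A, L oz_X = y ∧ (∀ f, ‖L f‖ ≤ ‖f‖) ∧ ∀ f, 0 ≤ f → 0 ≤ L f := by
  let i : C(spectrum ℝ y, I) := ⟨fun s => ⟨s.1, hsp s.2⟩, by fun_prop⟩
  refine ⟨(cfcHom hy).comp (ContinuousMap.compStarAlgHom' ℝ ℝ i), ?_, ?_, ?_⟩
  · have := cfcHom_id (R := ℝ) hy
    conv_rhs => rw [← this]
    rfl
  · intro f
    rw [StarAlgHom.comp_apply, norm_cfcHom y _ hy, ContinuousMap.norm_le _ (norm_nonneg _)]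
    intro s
    exact f.norm_coe_le_norm _
  · intro f hf
    rw [StarAlgHom.comp_apply, cfcHom_nonneg_iff]
    intro s
    exact hf _

lemma oz_jordan {ε : ℝ} (hε : 0 ≤ ε) (ψ : A →L[ℂ] B) (hψ : IsEpsOrderZero ε ψ)
    (x : A) (hx : IsSelfAdjoint x) (hx1 : ‖x‖ ≤ 1) :
    ‖ψ (x * x) * ψ 1 + ψ 1 * ψ (x * x) - (2 : ℝ) • (ψ x * ψ x)‖ ≤ 8 * ε / oz_c := by
  let y : A := (2⁻¹ : ℝ) • (1 + x)
  have hxy : x = (2 : ℝ) • y - 1 := by simp [y, smul_smul]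
  have hy : IsSelfAdjoint y := by
    apply IsSelfAdjoint.smul (by simp [IsSelfAdjoint])
    exact (IsSelfAdjoint.one A).add hx
  have hsp : spectrum ℝ y ⊆ I := by
    have hyc : y = cfc (fun t : ℝ => 2⁻¹ * (1 + t)) x := by
      rw [cfc_const_mul .., cfc_const_add .., cfc_id' ..]
      simp [y]
    rw [hyc, cfc_map_spectrum ..]
    rintro _ ⟨t, ht, rfl⟩
    have : ‖t‖ ≤ 1 := by
      rcases subsingleton_or_nontrivial A with hA | hA
      · simp [spectrum.of_subsingleton] at ht
      exact (spectrum.norm_le_norm_of_mem ht).trans hx1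
    rw [Real.norm_eq_abs, abs_le] at this
    constructor <;> simp only <;> linarith
  obtain ⟨L, hLX, hLn, hLp⟩ := oz_exists_hom y hy hsp
  let Lc : C(I, ℝ) →L[ℝ] A := LinearMap.mkContinuous
    (L.toAlgHom.toLinearMap) 1 (fun f => by simpa using hLn f)
  let φ : C(I, ℝ) →L[ℝ] B := (ψ.restrictScalars ℝ).comp Lc
  have hφa : ∀ f, φ f = ψ (L f) := fun f => rfl
  have key := oz_comm φ ε (fun f g hf hg hfg => by
    rw [hφa, hφa]
    refine (hψ _ _ (hLp f hf) (hLp g hg) (by rw [← map_mul, hfg, map_zero])).trans ?_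
    gcongr
    · exact hLn f
    · exact hLn g) hε
  simp only [hφa, map_pow, hLX, map_one] at key
  have e1 : ψ x = (2 : ℝ) • ψ y - ψ 1 := by
    rw [hxy, map_sub]; congr 1
    exact (ψ.restrictScalars ℝ).map_smul _ _
  have e2 : ψ (x * x) = (4 : ℝ) • ψ (y ^ 2) - (4 : ℝ) • ψ y + ψ 1 := by
    have : x * x = (4 : ℝ) • (y ^ 2) - (4 : ℝ) • y + 1 := by
      rw [hxy, pow_two]
      simp only [mul_sub, sub_mul, smul_mul_assoc, mul_smul_comm, mul_one, one_mul]
      module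
    rw [this, map_add, map_sub]; congr 2
    · exact (ψ.restrictScalars ℝ).map_smul _ _
    · exact (ψ.restrictScalars ℝ).map_smul _ _
  have e3 : ψ (x * x) * ψ 1 + ψ 1 * ψ (x * x) - (2 : ℝ) • (ψ x * ψ x)
      = (4 : ℝ) • (ψ (y ^ 2) * ψ 1 - (2 : ℝ) • (ψ y * ψ y) + ψ 1 * ψ (y ^ 2)) := by
    rw [e1, e2]
    simp only [mul_sub, sub_mul, smul_mul_assoc, mul_smul_comm, mul_add, add_mul]
    module
  rw [e3, norm_smul]
  calc _ ≤ ‖(4:ℝ)‖ * (2 * ε / oz_c) := by gcongr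
    _ = _ := by norm_num; ring
end

section
variable {A B : Type*} [CStarAlgebra A] [PartialOrder A] [StarOrderedRing A]

lemma oz_T [NonUnitalCStarAlgebra B] {ε : ℝ} (hε : 0 ≤ ε) (ψ : A →L[ℂ] B)
    (hψ : IsEpsOrderZero ε ψ)
    (hs : ∀ x : A, ψ (star x) = star (ψ x)) (q : B) (hq : IsSelfAdjoint q)
    (x : A) (hx : IsSelfAdjoint x) (hx1 : ‖x‖ ≤ 1) :
    ‖ψ x * q‖ ≤ ‖ψ 1 * q‖ + √(4 * ε / oz_c) * ‖q‖ := by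
  let S := {y : A // IsSelfAdjoint y ∧ ‖y‖ ≤ 1}
  have hsa : ∀ y : A, IsSelfAdjoint y → star (ψ y) = ψ y := fun y hy => by
    rw [← hs, hy.star_eq]
  have hbdd : BddAbove (Set.range fun y : S => ‖ψ y.1 * q‖) := by
    refine ⟨‖ψ‖ * ‖q‖, ?_⟩
    rintro _ ⟨y, rfl⟩
    refine (norm_mul_le _ _).trans ?_
    gcongr
    exact ψ.unit_le_opNorm _ y.2.2
  set T := ⨆ y : S, ‖ψ y.1 * q‖ with hT
  have hle : ∀ y : A, IsSelfAdjoint y → ‖y‖ ≤ 1 → ‖ψ y * q‖ ≤ T := fun y h1 h2 =>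
    le_ciSup hbdd (⟨y, h1, h2⟩ : S)
  have hT0 : 0 ≤ T := (norm_nonneg _).trans (hle x hx hx1)
  set b := ‖ψ 1 * q‖ with hb
  have hb' : ‖q * ψ 1‖ = b := by
    rw [hb, ← norm_star, star_mul, hq.star_eq, hsa _ (IsSelfAdjoint.one A)]
  set e := √(4 * ε / oz_c) * ‖q‖ with he
  have he0 : 0 ≤ e := by positivity
  have hee : e * e = (4 * ε / oz_c) * (‖q‖ * ‖q‖) := by
    have : √(4 * ε / oz_c) * √(4 * ε / oz_c) = 4 * ε / oz_c :=
      Real.mul_self_sqrt (div_nonneg (by positivity) oz_c_pos.le)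
    rw [he]; linear_combination (‖q‖ * ‖q‖) * this
  have hsq : ∀ y : A, IsSelfAdjoint y → ‖y‖ ≤ 1 →
      ‖ψ y * q‖ * ‖ψ y * q‖ ≤ T * b + e * e := by
    intro y hy hy1
    have hyy : IsSelfAdjoint (y * y) := by simp [IsSelfAdjoint, hy.star_eq]
    have hyy1 : ‖y * y‖ ≤ 1 := (norm_mul_le _ _).trans (mul_le_one₀ hy1 (norm_nonneg _) hy1)
    have hE := oz_jordan hε ψ hψ y hy hy1
    set E := ψ (y * y) * ψ 1 + ψ 1 * ψ (y * y) - (2 : ℝ) • (ψ y * ψ y) with hEdef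
    rw [← CStarRing.norm_star_mul_self, star_mul, hq.star_eq, hsa y hy]
    have e1 : (2 : ℝ) • (q * ψ y * (ψ y * q)) = (q * ψ (y * y)) * (ψ 1 * q)
        + (q * ψ 1) * (ψ (y * y) * q) - q * E * q := by
      rw [hEdef]
      simp only [mul_sub, sub_mul, smul_mul_assoc, mul_smul_comm, mul_add, add_mul, mul_assoc]
      module
    have h1 : ‖q * ψ (y * y)‖ ≤ T := by
      rw [← norm_star, star_mul, hq.star_eq, hsa _ hyy]
      exact hle _ hyy hyy1
    have h2 : ‖q * E * q‖ ≤ 8 * ε / oz_c * (‖q‖ * ‖q‖) := by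
      calc _ ≤ ‖q‖ * ‖E‖ * ‖q‖ := by
            refine (norm_mul_le _ _).trans ?_
            gcongr
            exact norm_mul_le _ _
        _ ≤ ‖q‖ * (8 * ε / oz_c) * ‖q‖ := by gcongr
        _ = _ := by ring
    have h3 : ‖(2 : ℝ) • (q * ψ y * (ψ y * q))‖ ≤ T * b + b * T + 8 * ε / oz_c * (‖q‖ * ‖q‖) := by
      rw [e1]
      refine (norm_sub_le _ _).trans (add_le_add ((norm_add_le _ _).trans (add_le_add ?_ ?_)) h2)
      · refine (norm_mul_le _ _).trans ?_
        gcongr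
      · refine (norm_mul_le _ _).trans ?_
        rw [hb']
        gcongr
        exact hle _ hyy hyy1
    rw [norm_smul, Real.norm_of_nonneg zero_le_two] at h3
    have : 8 * ε / oz_c * (‖q‖ * ‖q‖) = 2 * (e * e) := by rw [hee]; ring
    linarith
  have hb0 : 0 ≤ b := norm_nonneg _
  have hTle : T ≤ √(T * b + e * e) := by
    have : Nonempty S := ⟨⟨x, hx, hx1⟩⟩
    refine ciSup_le fun y => Real.le_sqrt_of_sq_le ?_
    rw [pow_two]
    exact hsq _ y.2.1 y.2.2
  have hTT : T * T ≤ T * b + e * e := by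
    have h4 := mul_self_le_mul_self hT0 hTle
    rwa [Real.mul_self_sqrt (by positivity)] at h4
  refine (hle x hx hx1).trans ?_
  by_contra! hcon
  nlinarith

lemma oz_T' [NonUnitalCStarAlgebra B] {ε : ℝ} (hε : 0 ≤ ε) (ψ : A →L[ℂ] B)
    (hψ : IsEpsOrderZero ε ψ)
    (hs : ∀ x : A, ψ (star x) = star (ψ x)) (q : B) (hq : IsSelfAdjoint q) (x : A) :
    ‖ψ x * q‖ ≤ 2 * (‖ψ 1 * q‖ + √(4 * ε / oz_c) * ‖q‖) * ‖x‖ := by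
  have hsa : ∀ x : A, IsSelfAdjoint x →
      ‖ψ x * q‖ ≤ (‖ψ 1 * q‖ + √(4 * ε / oz_c) * ‖q‖) * ‖x‖ := by
    intro x hx
    rcases eq_or_ne x 0 with rfl | h0
    · simp
    have hn : 0 < ‖x‖ := norm_pos_iff.2 h0
    have := oz_T hε ψ hψ hs q hq ((‖x‖⁻¹ : ℝ) • x)
      (IsSelfAdjoint.smul (by simp [IsSelfAdjoint]) hx)
      (by rw [norm_smul]; simp [hn.ne'])
    have e : ψ ((‖x‖⁻¹ : ℝ) • x) = (‖x‖⁻¹ : ℝ) • ψ x := (ψ.restrictScalars ℝ).map_smul _ _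
    rw [e, smul_mul_assoc, norm_smul, norm_inv, norm_norm, inv_mul_le_iff₀ hn] at this
    linarith
  have hx := realPart_add_I_smul_imaginaryPart x
  have e : ψ x * q = ψ (realPart x : A) * q + Complex.I • (ψ (imaginaryPart x : A) * q) := by
    conv_lhs => rw [← hx]
    rw [map_add, map_smul, add_mul, smul_mul_assoc]
  rw [e]
  refine (norm_add_le _ _).trans ?_
  rw [norm_smul, Complex.norm_I, one_mul]
  have h1 := hsa _ (realPart x).2
  have h2 := hsa _ (imaginaryPart x).2
  have h3 : ‖(realPart x : A)‖ ≤ ‖x‖ := realPart.norm_le x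
  have h4 : ‖(imaginaryPart x : A)‖ ≤ ‖x‖ := imaginaryPart.norm_le x
  have h5 : 0 ≤ ‖ψ 1 * q‖ + √(4 * ε / oz_c) * ‖q‖ := by positivity
  nlinarith [mul_le_mul_of_nonneg_left h3 h5, mul_le_mul_of_nonneg_left h4 h5]

lemma oz_gen [NonUnitalCStarAlgebra B] {ε : ℝ} (hε : 0 ≤ ε) (ψ : A →L[ℂ] B)
    (hψ : IsEpsOrderZero ε ψ) (hs : ∀ x : A, ψ (star x) = star (ψ x))
    (f : ℝ → ℝ) (hf : Continuous f) (M₁ M₂ : ℝ)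
    (h₁ : ∀ t, |t| ≤ ‖ψ‖ → |t * f t| ≤ M₁) (h₂ : ∀ t, |t| ≤ ‖ψ‖ → |f t| ≤ M₂) (x : A) :
    ‖(ψ x : Unitization ℂ B) * cfc f (ψ 1 : Unitization ℂ B)‖
      ≤ 2 * (M₁ + √(4 * ε / oz_c) * M₂) * ‖x‖ := by
  let i : B →L[ℂ] Unitization ℂ B := LinearMap.mkContinuous
    (Unitization.inrHom ℂ ℂ B) 1 (fun b => by simp [Unitization.norm_inr])
  let ψ' := i.comp ψ
  have hi : ∀ b : B, i b = (b : Unitization ℂ B) := fun b => rfl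
  have hψ' : ∀ a, ψ' a = (ψ a : Unitization ℂ B) := fun a => rfl
  have hsa : IsSelfAdjoint (ψ 1 : Unitization ℂ B) := by
    rw [IsSelfAdjoint, ← Unitization.inr_star, ← hs, star_one]
  have hsp : ∀ t ∈ spectrum ℝ (ψ 1 : Unitization ℂ B), |t| ≤ ‖ψ‖ := by
    intro t ht
    have := spectrum.norm_le_norm_of_mem ht
    rw [Unitization.norm_inr] at this
    refine this.trans ?_
    rcases subsingleton_or_nontrivial A with hA | hA
    · rw [Subsingleton.elim (1 : A) 0, map_zero, norm_zero]; exact norm_nonneg _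
    · exact ψ.unit_le_opNorm _ (by simp)
  have hM₁ : 0 ≤ M₁ := (abs_nonneg _).trans (h₁ 0 (by simp))
  have hM₂ : 0 ≤ M₂ := (abs_nonneg _).trans (h₂ 0 (by simp))
  have hT := oz_T' hε ψ' (by
      intro a b ha hb hab
      rw [hψ', hψ', ← Unitization.inr_mul, Unitization.norm_inr]
      exact hψ a b ha hb hab) (by
      intro a; rw [hψ', hψ', hs, Unitization.inr_star])
    (cfc f (ψ 1 : Unitization ℂ B)) (cfc_predicate f _) x
  rw [hψ', hψ'] at hT
  refine hT.trans ?_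
  gcongr
  · have : (ψ 1 : Unitization ℂ B) * cfc f (ψ 1 : Unitization ℂ B)
        = cfc (fun t => t * f t) (ψ 1 : Unitization ℂ B) := by
      rw [cfc_mul .., cfc_id' ..]
    rw [this]
    exact norm_cfc_le hM₁ fun t ht => h₁ t (hsp t ht)
  · exact norm_cfc_le hM₂ fun t ht => h₂ t (hsp t ht)
end

/-- Cut-off version of `|t|^{-2α}`. -/
noncomputable def oz_g (α δ : ℝ) (t : ℝ) : ℝ := (t * t) ^ (1 - α) / (t * t + δ ^ 2)

lemma oz_young (T δ a : ℝ) (hT : 0 ≤ T) (hδ : 0 < δ) (ha0 : 0 ≤ a) (ha2 : a ≤ 2) :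
    T ^ a * δ ^ (2 - a) ≤ T * T + δ ^ 2 := by
  rcases le_total T δ with h | h
  · calc T ^ a * δ ^ (2 - a) ≤ δ ^ a * δ ^ (2 - a) := by gcongr
      _ = δ ^ 2 := by rw [← Real.rpow_add hδ]; norm_num
      _ ≤ _ := by nlinarith
  · have hT' : 0 < T := hδ.trans_le h
    calc T ^ a * δ ^ (2 - a) ≤ T ^ a * T ^ (2 - a) := by
          gcongr
      _ = T * T := by rw [← Real.rpow_add hT']; norm_num [pow_two]
      _ ≤ _ := by nlinarith

lemma oz_sq_rpow (t a : ℝ) : (t * t) ^ a = |t| ^ (2 * a) := by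
  rw [← abs_mul_abs_self t, Real.rpow_mul (abs_nonneg t), ← pow_two]
  norm_num

lemma oz_g_cont (α δ : ℝ) (hα : α < 1) (hδ : 0 < δ) : Continuous (oz_g α δ) := by
  unfold oz_g
  refine Continuous.div ?_ (by fun_prop) (fun t => by have := mul_self_nonneg t; positivity)
  exact Continuous.rpow_const (by fun_prop) (fun _ => Or.inr (by linarith))

lemma oz_g_nonneg (α δ t : ℝ) : 0 ≤ oz_g α δ t := by
  have := mul_self_nonneg t
  unfold oz_g; positivity

lemma oz_g_le (α δ t : ℝ) (hα0 : 0 < α) (hα : α < 1 / 10) (hδ : 0 < δ) :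
    |oz_g α δ t| ≤ δ ^ (-(2 * α)) := by
  have h0 := mul_self_nonneg t
  rw [abs_of_nonneg (oz_g_nonneg _ _ _), oz_g, div_le_iff₀ (by positivity), oz_sq_rpow]
  have h := oz_young |t| δ (2 * (1 - α)) (abs_nonneg t) hδ (by linarith) (by linarith)
  rw [abs_mul_abs_self] at h
  rw [Real.rpow_neg hδ.le, inv_mul_eq_div, le_div_iff₀ (by positivity)]
  have e : 2 - 2 * (1 - α) = 2 * α := by ring
  rwa [e] at h

lemma oz_tg_le' (α δ t : ℝ) (hα : α < 1 / 10) (hδ : 0 < δ) :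
    |t * oz_g α δ t| ≤ |t| ^ (1 - 2 * α) := by
  have h0 := mul_self_nonneg t
  rcases eq_or_ne t 0 with rfl | ht
  · simp; positivity
  have hT : 0 < |t| := abs_pos.2 ht
  rw [abs_mul, abs_of_nonneg (oz_g_nonneg _ _ _), oz_g, oz_sq_rpow, ← mul_div_assoc,
    div_le_iff₀ (by positivity)]
  have : |t| * |t| ^ (2 * (1 - α)) = |t| ^ (1 - 2 * α) * (t * t) := by
    rw [← abs_mul_abs_self t]
    nth_rewrite 1 [← Real.rpow_one |t|]
    rw [← Real.rpow_add hT, ← pow_two, ← Real.rpow_natCast, ← Real.rpow_add hT]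
    congr 1; push_cast; ring
  rw [this]
  gcongr
  nlinarith

lemma oz_tg_le (α δ t N : ℝ) (hα : α < 1 / 10) (hδ : 0 < δ) (ht : |t| ≤ N) :
    |t * oz_g α δ t| ≤ N ^ (1 - 2 * α) :=
  (oz_tg_le' α δ t hα hδ).trans (by gcongr; linarith)

lemma oz_tdiff_le (α δ δ' t : ℝ) (hα0 : 0 < α) (hα : α < 1 / 10) (hδ' : 0 < δ') (h : δ' ≤ δ) :
    |t * (oz_g α δ' t - oz_g α δ t)| ≤ δ ^ (1 - 2 * α) := by
  have hδ : 0 < δ := hδ'.trans_le h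
  have h0 := mul_self_nonneg t
  have e : t * (oz_g α δ' t - oz_g α δ t)
      = (t * oz_g α δ' t) * ((δ ^ 2 - δ' ^ 2) / (t * t + δ ^ 2)) := by
    have h1 : t * t + δ ^ 2 ≠ 0 := by positivity
    have h2 : t * t + δ' ^ 2 ≠ 0 := by positivity
    unfold oz_g
    generalize (t * t) ^ (1 - α) = w
    field_simp
    ring
  have h3 : 0 ≤ δ ^ 2 - δ' ^ 2 := by nlinarith
  rw [e, abs_mul, abs_of_nonneg (a := (δ ^ 2 - δ' ^ 2) / (t * t + δ ^ 2)) (by positivity)]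
  have hy := oz_young |t| δ (1 - 2 * α) (abs_nonneg t) hδ (by linarith) (by linarith)
  rw [abs_mul_abs_self] at hy
  calc _ ≤ |t| ^ (1 - 2 * α) * (δ ^ 2 / (t * t + δ ^ 2)) := by
        gcongr
        · exact oz_tg_le' α δ' t hα hδ'
        · nlinarith
    _ ≤ _ := by
        rw [← mul_div_assoc, div_le_iff₀ (by positivity)]
        have : δ ^ 2 = δ ^ (2 - (1 - 2 * α)) * δ ^ (1 - 2 * α) := by
          rw [← Real.rpow_add hδ]; norm_num
        have h5 : 0 ≤ δ ^ (1 - 2 * α) := by positivity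
        calc |t| ^ (1 - 2 * α) * δ ^ 2
            = (|t| ^ (1 - 2 * α) * δ ^ (2 - (1 - 2 * α))) * δ ^ (1 - 2 * α) := by
              rw [this]; ring
          _ ≤ _ := by rw [mul_comm (δ ^ (1 - 2 * α))]; gcongr

lemma oz_g_mul (α δ t : ℝ) (hδ : 0 < δ) :
    oz_g α δ t * (t * t) ^ α = 1 - δ ^ 2 / (t * t + δ ^ 2) := by
  have h0 := mul_self_nonneg t
  have h1 : t * t + δ ^ 2 ≠ 0 := by positivity
  have e : (t * t) ^ (1 - α) * (t * t) ^ α = t * t := by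
    rcases eq_or_lt_of_le h0 with h | h
    · rw [← h]
      rcases eq_or_ne α 0 with rfl | hα
      · simp
      · simp [Real.zero_rpow hα]
    · rw [← Real.rpow_add h]; simp
  unfold oz_g
  rw [div_mul_eq_mul_div, e]
  field_simp; ring

lemma oz_g_zero (α δ : ℝ) (hα : α < 1 / 10) : oz_g α δ 0 = 0 := by
  simp [oz_g, Real.zero_rpow (show 1 - α ≠ 0 by linarith)]

lemma oz_p_le (δ t : ℝ) (hδ : 0 < δ) : |δ ^ 2 / (t * t + δ ^ 2)| ≤ 1 := by
  have h0 := mul_self_nonneg t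
  rw [abs_of_nonneg (by positivity), div_le_one (by positivity)]; linarith

lemma oz_tp_le (δ t : ℝ) (hδ : 0 < δ) : |t * (δ ^ 2 / (t * t + δ ^ 2))| ≤ δ := by
  have h0 := mul_self_nonneg t
  rw [abs_mul, abs_of_nonneg (a := δ ^ 2 / _) (by positivity), ← mul_div_assoc,
    div_le_iff₀ (by positivity), ← abs_mul_abs_self t]
  have := abs_nonneg t
  nlinarith [mul_nonneg hδ.le (sq_nonneg (|t| - δ)), mul_nonneg hδ.le (mul_nonneg this hδ.le)]

section
variable {A B : Type*} [CStarAlgebra A] [PartialOrder A] [StarOrderedRing A]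

lemma oz_pkg [NonUnitalCStarAlgebra B] [PartialOrder B] [StarOrderedRing B]
    {ε : ℝ} (hε : 0 ≤ ε) (ψ : A →L[ℂ] B)
    (hψ : IsEpsOrderZero ε ψ) (hs : ∀ x : A, ψ (star x) = star (ψ x))
    (α : ℝ) (hα0 : 0 < α) (hα : α < 1 / 10) (x : A) :
    ∃ U : ℝ → B, ∀ δ, 0 < δ →
      ‖U δ‖ ≤ 2 * (‖ψ‖ ^ (1 - 2 * α) + √(4 * ε / oz_c) * δ ^ (-(2 * α))) * ‖x‖ ∧
      ‖ψ x - U δ * CFC.nnrpow (ψ 1 * ψ 1) ⟨α, hα0.le⟩‖ ≤ 2 * (δ + √(4 * ε / oz_c) * 1) * ‖x‖ ∧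
      ∀ δ', 0 < δ' → δ' ≤ δ → ‖U δ' - U δ‖ ≤
        2 * (δ ^ (1 - 2 * α) +
          √(4 * ε / oz_c) * (δ' ^ (-(2 * α)) + δ ^ (-(2 * α)))) * ‖x‖ := by
  have hsa0 : IsSelfAdjoint (ψ 1) := by rw [IsSelfAdjoint, ← hs, star_one]
  have hsa : IsSelfAdjoint (ψ 1 : Unitization ℂ B) := by
    rw [IsSelfAdjoint, ← Unitization.inr_star, hsa0.star_eq]
  have hc : ∀ δ, 0 < δ → Continuous (oz_g α δ) := fun δ hδ => oz_g_cont α δ (by linarith) hδ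
  have hinr : ∀ δ, ((ψ x * cfcₙ (oz_g α δ) (ψ 1) : B) : Unitization ℂ B)
      = (ψ x : Unitization ℂ B) * cfc (oz_g α δ) (ψ 1 : Unitization ℂ B) := by
    intro δ
    rw [Unitization.inr_mul, Unitization.real_cfcₙ_eq_cfc_inr _ _ (oz_g_zero α δ hα)]
  refine ⟨fun δ => ψ x * cfcₙ (oz_g α δ) (ψ 1), fun δ hδ => ⟨?_, ?_, ?_⟩⟩
  · rw [← Unitization.norm_inr (𝕜 := ℂ), hinr]
    exact oz_gen hε ψ hψ hs _ (hc δ hδ) _ _ (fun t ht => oz_tg_le α δ t _ hα hδ ht)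
      (fun t ht => oz_g_le α δ t hα0 hα hδ) x
  · have hpc : Continuous (fun t : ℝ => δ ^ 2 / (t * t + δ ^ 2)) := by
      refine Continuous.div (by fun_prop) (by fun_prop)
        (fun t => by have := mul_self_nonneg t; positivity)
    have hac : Continuous (fun t : ℝ => t ^ α) :=
      Continuous.rpow_const (by fun_prop) (fun _ => Or.inr hα0.le)
    have hac' : Continuous (fun t : ℝ => (t * t) ^ α) := hac.comp (by fun_prop)
    have hnn : 0 ≤ ψ 1 * ψ 1 := hsa0.mul_self_nonneg
    have ek : ((CFC.nnrpow (ψ 1 * ψ 1) ⟨α, hα0.le⟩ : B) : Unitization ℂ B)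
        = cfc (fun t : ℝ => (t * t) ^ α) (ψ 1 : Unitization ℂ B) := by
      have hk0 : CFC.nnrpow (ψ 1 * ψ 1) ⟨α, hα0.le⟩ = cfcₙ (fun t : ℝ => t ^ α) (ψ 1 * ψ 1) :=
        CFC.nnrpow_eq_cfcₙ_real _ _ hnn
      rw [hk0, Unitization.real_cfcₙ_eq_cfc_inr _ _ (by simp [Real.zero_rpow hα0.ne']),
        Unitization.inr_mul]
      have : (ψ 1 : Unitization ℂ B) * (ψ 1 : Unitization ℂ B)
          = cfc (fun t : ℝ => t * t) (ψ 1 : Unitization ℂ B) := by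
        rw [cfc_mul .., cfc_id' ..]
      rw [this, ← cfc_comp' (fun t : ℝ => t ^ α) (fun t : ℝ => t * t) _
        (hac.continuousOn)]
    have e : ((ψ x - ψ x * cfcₙ (oz_g α δ) (ψ 1) * CFC.nnrpow (ψ 1 * ψ 1) ⟨α, hα0.le⟩ : B) :
        Unitization ℂ B)
        = (ψ x : Unitization ℂ B) *
          cfc (fun t : ℝ => δ ^ 2 / (t * t + δ ^ 2)) (ψ 1 : Unitization ℂ B) := by
      rw [Unitization.inr_sub, Unitization.inr_mul, hinr, ek, mul_assoc,
        ← cfc_mul _ _ _ (hc δ hδ).continuousOn hac'.continuousOn]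
      simp only [oz_g_mul α δ _ hδ]
      rw [cfc_sub _ _ _ (by fun_prop) hpc.continuousOn, cfc_const_one ..]
      rw [mul_sub, mul_one]; abel
    rw [← Unitization.norm_inr (𝕜 := ℂ), e]
    exact oz_gen hε ψ hψ hs _ hpc _ _ (fun t ht => oz_tp_le δ t hδ)
      (fun t ht => oz_p_le δ t hδ) x
  · intro δ' hδ' hle
    have e : ((ψ x * cfcₙ (oz_g α δ') (ψ 1) - ψ x * cfcₙ (oz_g α δ) (ψ 1) : B) :
        Unitization ℂ B) = (ψ x : Unitization ℂ B) *
          cfc (fun t => oz_g α δ' t - oz_g α δ t) (ψ 1 : Unitization ℂ B) := by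
      rw [Unitization.inr_sub, hinr, hinr,
        cfc_sub _ _ _ (hc δ' hδ').continuousOn (hc δ hδ).continuousOn, mul_sub]
    simp only
    rw [← Unitization.norm_inr (𝕜 := ℂ), e]
    exact oz_gen hε ψ hψ hs _ ((hc δ' hδ').sub (hc δ hδ)) _ _
      (fun t ht => oz_tdiff_le α δ δ' t hα0 hα hδ' hle)
      (fun t ht => (abs_sub _ _).trans
        (add_le_add (oz_g_le α δ' t hα0 hα hδ') (oz_g_le α δ t hα0 hα hδ))) x
end

/-- There is an absolute constant `K` such that for every self-adjoint
ε-order zero map `ψ` on a unital C*-algebra, with `h := ψ(1)`, every `0 < α < 1/10` and every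
`x`, there exists `u` with `‖u‖ ≤ 2‖ψ‖^{1−2α}‖x‖` and
`‖ψ(x) − u·(h²)^α‖ ≤ K‖ψ‖^{3/5}ε^{1/5}‖x‖`; here `(h²)^α` is the real power given by the
continuous functional calculus. -/
theorem stmt_13 :
    ∃ K : ℝ, ∀ (A B : Type) (_ : CStarAlgebra A) (_ : PartialOrder A) (_ : StarOrderedRing A)
      (_ : NonUnitalCStarAlgebra B) (_ : PartialOrder B) (_ : StarOrderedRing B)
      (ε : ℝ), 0 ≤ ε →
      ∀ ψ : A →L[ℂ] B, IsEpsOrderZero ε ψ → (∀ x : A, ψ (star x) = star (ψ x)) →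
      ∀ h : B, h = ψ 1 →
      ∀ α : ℝ, ∀ hα : 0 < α, α < 1 / 10 →
      ∀ x : A, ∃ u : B,
        ‖u‖ ≤ 2 * ‖ψ‖ ^ (1 - 2 * α) * ‖x‖ ∧
        ‖ψ x - u * CFC.nnrpow (h * h) ⟨α, hα.le⟩‖ ≤
          K * ‖ψ‖ ^ ((3 : ℝ) / 5) * ε ^ ((1 : ℝ) / 5) * ‖x‖ := by
  set C : ℝ := √(4 / oz_c) with hC
  have hC0 : 0 ≤ C := Real.sqrt_nonneg _
  refine ⟨2 + 3 * C, ?_⟩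
  intro A B _ _ _ _ _ _ ε hε ψ hψ hs h hh α hα0 hα x
  subst hh
  obtain ⟨U, hU⟩ := oz_pkg hε ψ hψ hs α hα0 hα x
  set k := CFC.nnrpow (ψ 1 * ψ 1) ⟨α, hα0.le⟩ with hk
  have hCε : √(4 * ε / oz_c) = C * √ε := by
    rw [hC, ← Real.sqrt_mul (div_nonneg (by norm_num) oz_c_pos.le)]; congr 1; ring
  rw [hCε] at hU
  have hN0 : 0 ≤ ‖ψ‖ := norm_nonneg _
  rcases eq_or_lt_of_le hε with he | he
  · -- exact case
    subst he
    simp only [Real.sqrt_zero, mul_zero, zero_mul, add_zero] at hU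
    let d : ℕ → ℝ := fun n => 1 / ((n : ℝ) + 1)
    have hd : ∀ n, 0 < d n := fun n => by positivity
    have hd0 : Tendsto d atTop (𝓝 0) := tendsto_one_div_add_atTop_nhds_zero_nat
    have hdm : ∀ n m, n ≤ m → d m ≤ d n := fun n m hnm => one_div_le_one_div_of_le (by positivity)
      (by gcongr)
    have hb : Tendsto (fun n => 2 * (2 * (d n) ^ (1 - 2 * α) * ‖x‖)) atTop (𝓝 0) := by
      have : Tendsto (fun n => (d n) ^ (1 - 2 * α)) atTop (𝓝 0) := by
        have := hd0.rpow_const (p := 1 - 2 * α) (Or.inr (by linarith))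
        rwa [Real.zero_rpow (by linarith)] at this
      simpa using ((this.const_mul 2).mul_const ‖x‖).const_mul 2
    have hcau : CauchySeq (fun n => U (d n)) := by
      refine cauchySeq_of_le_tendsto_0 _ (fun n m N hn hm => ?_) hb
      have h1 := (hU (d N) (hd N)).2.2 (d n) (hd n) (hdm _ _ hn)
      have h2 := (hU (d N) (hd N)).2.2 (d m) (hd m) (hdm _ _ hm)
      have h3 := dist_triangle_right (U (d n)) (U (d m)) (U (d N))
      rw [dist_eq_norm (U (d n)) (U (d N)), dist_eq_norm (U (d m)) (U (d N))] at h3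
      linarith
    obtain ⟨u, hu⟩ := cauchySeq_tendsto_of_complete hcau
    refine ⟨u, ?_, ?_⟩
    · exact le_of_tendsto hu.norm (Eventually.of_forall fun n => (hU _ (hd n)).1)
    · have h1 : Tendsto (fun n => ‖ψ x - U (d n) * k‖) atTop (𝓝 ‖ψ x - u * k‖) :=
        (tendsto_const_nhds.sub (hu.mul_const k)).norm
      have h2 : Tendsto (fun n => 2 * d n * ‖x‖) atTop (𝓝 (2 * 0 * ‖x‖)) :=
        (hd0.const_mul 2).mul_const _
      have h3 := le_of_tendsto_of_tendsto' h1 h2 (fun n => (hU _ (hd n)).2.1)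
      rw [Real.zero_rpow (by norm_num)]
      simpa using h3
  rcases eq_or_lt_of_le hN0 with hN | hN
  · refine ⟨0, ?_, ?_⟩
    · rw [norm_zero]; positivity
    · have : ψ x = 0 := by
        have := ψ.le_opNorm x
        rw [← hN, zero_mul] at this
        exact norm_le_zero_iff.1 this
      rw [this]; simp only [zero_mul, sub_zero, norm_zero]; positivity
  set N := ‖ψ‖ with hNdef
  set δ := N ^ ((3 : ℝ) / 5) * ε ^ ((1 : ℝ) / 5) with hδ
  have hδ0 : 0 < δ := by positivity
  have hxN : ‖ψ x‖ ≤ N * ‖x‖ := ψ.le_opNorm x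
  have hx0 := norm_nonneg x
  rcases le_total N δ with hNδ | hNδ
  · refine ⟨0, ?_, ?_⟩
    · rw [norm_zero]; positivity
    · simp only [zero_mul, sub_zero]
      calc ‖ψ x‖ ≤ N * ‖x‖ := hxN
        _ ≤ δ * ‖x‖ := by gcongr
        _ ≤ (2 + 3 * C) * δ * ‖x‖ := by gcongr; nlinarith
        _ = _ := by rw [hδ]; ring
  · set r := δ / N with hr
    have hr0 : 0 < r := by positivity
    have hr1 : r ≤ 1 := (div_le_one hN).2 hNδ
    have hδr : δ = N * r := by rw [hr]; field_simp
    have hsq : √ε = N * r ^ ((5 : ℝ) / 2) := by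
      rw [hr, Real.div_rpow hδ0.le hN.le, hδ, Real.mul_rpow (by positivity) (by positivity),
        ← Real.rpow_mul hN.le, ← Real.rpow_mul he.le, Real.sqrt_eq_rpow, mul_div_assoc',
        eq_div_iff (by positivity)]
      have e1 : N * (N ^ ((3 : ℝ) / 5 * (5 / 2)) * ε ^ ((1 : ℝ) / 5 * (5 / 2)))
          = (N ^ (1 : ℝ) * N ^ ((3 : ℝ) / 5 * (5 / 2))) * ε ^ ((1 : ℝ) / 5 * (5 / 2)) := by
        rw [Real.rpow_one]; ring
      rw [e1, ← Real.rpow_add hN, mul_comm]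
      norm_num
    obtain ⟨hU1, hU2, -⟩ := hU δ hδ0
    have hs1 : √ε ≤ N * r := by
      rw [hsq]; gcongr
      calc r ^ ((5 : ℝ) / 2) ≤ r ^ (1 : ℝ) :=
            Real.rpow_le_rpow_of_exponent_ge hr0 hr1 (by norm_num)
        _ = r := Real.rpow_one r
    have hs2 : √ε * δ ^ (-(2 * α)) ≤ N ^ (1 - 2 * α) * r := by
      rw [hsq, hδr, Real.mul_rpow hN.le hr0.le]
      have e1 : N * r ^ ((5 : ℝ) / 2) * (N ^ (-(2 * α)) * r ^ (-(2 * α)))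
          = (N ^ (1 : ℝ) * N ^ (-(2 * α))) * (r ^ ((5 : ℝ) / 2) * r ^ (-(2 * α))) := by
        rw [Real.rpow_one]; ring
      rw [e1, ← Real.rpow_add hN, ← Real.rpow_add hr0]
      rw [← sub_eq_add_neg 1 (2 * α)]
      refine mul_le_mul_of_nonneg_left ?_ (by positivity)
      · calc _ ≤ r ^ (1 : ℝ) :=
              Real.rpow_le_rpow_of_exponent_ge hr0 hr1 (by linarith)
          _ = r := Real.rpow_one r
    have hD : 0 < 1 + C * r := by positivity
    have hP : 0 < N ^ (1 - 2 * α) := by positivity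
    refine ⟨((1 + C * r)⁻¹ : ℝ) • U δ, ?_, ?_⟩
    · rw [norm_smul, Real.norm_of_nonneg (by positivity), inv_mul_le_iff₀ hD]
      refine hU1.trans ?_
      calc _ = 2 * (N ^ (1 - 2 * α) + C * (√ε * δ ^ (-(2 * α)))) * ‖x‖ := by ring
        _ ≤ 2 * (N ^ (1 - 2 * α) + C * (N ^ (1 - 2 * α) * r)) * ‖x‖ := by gcongr
        _ = _ := by ring
    · have e : ψ x - ((1 + C * r)⁻¹ : ℝ) • U δ * k
          = ((1 + C * r)⁻¹ : ℝ) • (ψ x - U δ * k) + (C * r * (1 + C * r)⁻¹ : ℝ) • ψ x := by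
        have : ψ x = ((1 + C * r)⁻¹ : ℝ) • ψ x + (C * r * (1 + C * r)⁻¹ : ℝ) • ψ x := by
          rw [← add_smul]
          have : (1 + C * r)⁻¹ + C * r * (1 + C * r)⁻¹ = 1 := by field_simp
          rw [this, one_smul]
        nth_rewrite 1 [this]
        rw [smul_mul_assoc]; module
      have hi1 : (1 + C * r)⁻¹ ≤ 1 := inv_le_one_of_one_le₀ (by nlinarith)
      rw [e]
      refine (norm_add_le _ _).trans ?_
      rw [norm_smul, norm_smul, Real.norm_of_nonneg (by positivity),
        Real.norm_of_nonneg (by positivity)]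
      calc _ ≤ 1 * (2 * (δ + C * √ε * 1) * ‖x‖) + (C * r * 1) * (N * ‖x‖) := by gcongr
        _ ≤ 1 * (2 * (N * r + C * (N * r) * 1) * ‖x‖) + (C * r * 1) * (N * ‖x‖) := by
            rw [hδr]; gcongr
        _ = (2 + 3 * C) * (N * r) * ‖x‖ := by ring
        _ = _ := by rw [← hδr, hδ]; ring
end

section
/- There exists an absolute constant K < ∞ (the same constant as in the approximation of the range by the hereditary subalgebra) such that for all C*-algebras A and B with A unital, every ε ≥ 0, and every self-adjoint bounded linear ε-order zero map ψ : A → B with h := ψ(1_A), at least one of the following two inequalities holds: (a) ‖ψ‖ ≤ √((K+2)^5 ε), or (b) ‖ψ‖ ≤ (K+2)^5‖h‖. -/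
/-- A positive contraction is within `1/2` of `1/2`. -/
lemma aux_half {A : Type} [CStarAlgebra A] [PartialOrder A] [StarOrderedRing A] (p : A)
    (hp : 0 ≤ p) (hp1 : ‖p‖ ≤ 1) : ‖p - (1/2 : ℝ) • (1 : A)‖ ≤ 1/2 := by
  have hple : p ≤ 1 := (CStarAlgebra.norm_le_one_iff_of_nonneg p hp).1 hp1
  have hsa : IsSelfAdjoint p := .of_nonneg hp
  have e : p - (1/2 : ℝ) • (1 : A) = cfc (fun x : ℝ => x - 1/2) p := by
    rw [cfc_sub (R := ℝ) (fun x => x) (fun _ => 1/2) p, cfc_id' ℝ p, cfc_const (1/2 : ℝ) p, Algebra.algebraMap_eq_smul_one]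
  rw [e]
  refine norm_cfc_le (by norm_num) fun x hx => ?_
  have h0 : 0 ≤ x := spectrum_nonneg_of_nonneg hp hx
  have h1 : x ≤ 1 := by
    have := (le_algebraMap_iff_spectrum_le (R := ℝ) (r := 1) (a := p)).1 (by simpa using hple)
    exact this x hx
  rw [Real.norm_eq_abs, abs_le]
  constructor <;> linarith

theorem stmt_15 :
    ∃ K : ℝ, ∀ (A B : Type) (_ : CStarAlgebra A) (_ : PartialOrder A) (_ : StarOrderedRing A)
      (_ : NonUnitalCStarAlgebra B) (ε : ℝ), 0 ≤ ε →
      ∀ ψ : A →L[ℂ] B, IsEpsOrderZero ε ψ → (∀ x : A, ψ (star x) = star (ψ x)) →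
      ∀ h : B, h = ψ 1 →
        ‖ψ‖ ≤ Real.sqrt ((K + 2) ^ 5 * ε) ∨ ‖ψ‖ ≤ (K + 2) ^ 5 * ‖h‖ := by
  refine ⟨0, ?_⟩
  intro A B _ _ _ _ ε hε ψ hψ hstar h hh
  set S : Set ℝ := {r | ∃ a : A, IsSelfAdjoint a ∧ ‖a‖ ≤ 1 ∧ r = ‖ψ a‖} with hS
  have hbdd : BddAbove S := by
    refine ⟨‖ψ‖, ?_⟩
    rintro r ⟨a, -, ha, rfl⟩
    exact ψ.le_of_opNorm_le_of_le le_rfl ha |>.trans (by simp)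
  have hne : S.Nonempty := ⟨‖ψ 0‖, 0, .zero A, by simp, rfl⟩
  set N := sSup S with hN
  have hmem : ∀ a : A, IsSelfAdjoint a → ‖a‖ ≤ 1 → ‖ψ a‖ ≤ N := fun a h1 h2 =>
    le_csSup hbdd ⟨a, h1, h2, rfl⟩
  have hN0 : 0 ≤ N := by simpa using hmem 0 (.zero A) (by simp)
  have hreal : ∀ (r : ℝ) (a : A), ψ (r • a) = r • ψ a := fun r a => by
    rw [← Complex.coe_smul, map_smul, Complex.coe_smul]
  have hscale : ∀ (a : A), IsSelfAdjoint a → ‖ψ a‖ ≤ N * ‖a‖ := by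
    intro a ha
    rcases eq_or_ne a 0 with rfl | h0
    · simp
    have hpos : 0 < ‖a‖ := norm_pos_iff.2 h0
    have h1 := hmem (‖a‖⁻¹ • a) (IsSelfAdjoint.smul (.all _) ha)
      (by rw [norm_smul, norm_inv, norm_norm, inv_mul_cancel₀ hpos.ne'])
    rw [hreal, norm_smul, norm_inv, norm_norm, inv_mul_le_iff₀ hpos] at h1
    linarith [mul_comm N ‖a‖]
  have hM : ‖ψ‖ ≤ 2 * N := by
    refine ψ.opNorm_le_bound (by positivity) fun x => ?_
    have hx := realPart_add_I_smul_imaginaryPart x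
    have h1 := hscale _ (realPart x).2
    have h2 := hscale _ (imaginaryPart x).2
    have h3 : ‖((realPart x : selfAdjoint A) : A)‖ ≤ ‖x‖ := realPart.norm_le x
    have h4 : ‖((imaginaryPart x : selfAdjoint A) : A)‖ ≤ ‖x‖ := imaginaryPart.norm_le x
    calc ‖ψ x‖ = ‖ψ (realPart x : A) + Complex.I • ψ (imaginaryPart x : A)‖ := by
          rw [← map_smul, ← map_add, hx]
      _ ≤ ‖ψ (realPart x : A)‖ + ‖Complex.I • ψ (imaginaryPart x : A)‖ := norm_add_le _ _
      _ = ‖ψ (realPart x : A)‖ + ‖ψ (imaginaryPart x : A)‖ := by rw [norm_smul]; simp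
      _ ≤ 2 * N * ‖x‖ := by nlinarith
  have hhalf : ∀ p : A, 0 ≤ p → ‖p‖ ≤ 1 → ‖ψ p‖ ≤ (N + ‖h‖) / 2 := by
    intro p hp hp1
    have h1 := aux_half p hp hp1
    have h2 := hscale (p - (1/2 : ℝ) • (1 : A))
      ((IsSelfAdjoint.of_nonneg hp).sub (IsSelfAdjoint.smul (by simp) (.one A)))
    have h3 : ψ p = ψ (p - (1/2 : ℝ) • (1 : A)) + (1/2 : ℝ) • h := by
      rw [map_sub, hreal, hh]; abel
    rw [h3]
    refine (norm_add_le _ _).trans ?_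
    rw [norm_smul, Real.norm_of_nonneg (by norm_num : (0:ℝ) ≤ 1/2)]
    nlinarith
  have hkey : ∀ a : A, IsSelfAdjoint a → ‖a‖ ≤ 1 →
      ‖ψ a‖ ^ 2 ≤ (N + ‖h‖) ^ 2 / 2 + 2 * ε := by
    intro a ha ha1
    have hp1 : ‖a⁺‖ ≤ 1 := (CStarAlgebra.norm_posPart_le a).trans ha1
    have hq1 : ‖a⁻‖ ≤ 1 := (CStarAlgebra.norm_negPart_le a).trans ha1
    have hp0 := CFC.posPart_nonneg a
    have hq0 := CFC.negPart_nonneg a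
    have hp := hhalf _ hp0 hp1
    have hq := hhalf _ hq0 hq1
    have hb : ε * ‖a⁺‖ * ‖a⁻‖ ≤ ε := by
      have := mul_le_one₀ hp1 (norm_nonneg _) hq1
      nlinarith
    have hpq := (hψ _ _ hp0 hq0 (CFC.posPart_mul_negPart a)).trans hb
    have hqp := (hψ _ _ hq0 hp0 (CFC.negPart_mul_posPart a)).trans (by rwa [mul_right_comm] : _ ≤ ε)
    have hsa : star (ψ a) = ψ a := by rw [← hstar, ha.star_eq]
    have hsq : ‖ψ a‖ ^ 2 = ‖ψ a * ψ a‖ := by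
      rw [pow_two, ← CStarRing.norm_star_mul_self, hsa]
    have hexp : ψ a * ψ a = ψ a⁺ * ψ a⁺ + ψ a⁻ * ψ a⁻ - (ψ a⁺ * ψ a⁻ + ψ a⁻ * ψ a⁺) := by
      have : ψ a = ψ a⁺ - ψ a⁻ := by rw [← map_sub, CFC.posPart_sub_negPart a]
      rw [this, mul_sub, sub_mul, sub_mul]; abel
    rw [hsq, hexp]
    have n1 := norm_sub_le (ψ a⁺ * ψ a⁺ + ψ a⁻ * ψ a⁻) (ψ a⁺ * ψ a⁻ + ψ a⁻ * ψ a⁺)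
    have n2 := norm_add_le (ψ a⁺ * ψ a⁺) (ψ a⁻ * ψ a⁻)
    have n3 := norm_add_le (ψ a⁺ * ψ a⁻) (ψ a⁻ * ψ a⁺)
    have n4 := norm_mul_le (ψ a⁺) (ψ a⁺)
    have n5 := norm_mul_le (ψ a⁻) (ψ a⁻)
    have n6 := mul_self_le_mul_self (norm_nonneg _) hp
    have n7 := mul_self_le_mul_self (norm_nonneg _) hq
    nlinarith
  have hsup : N ^ 2 ≤ (N + ‖h‖) ^ 2 / 2 + 2 * ε := by
    have : N ≤ Real.sqrt ((N + ‖h‖) ^ 2 / 2 + 2 * ε) := by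
      refine csSup_le hne ?_
      rintro r ⟨a, h1, h2, rfl⟩
      exact Real.le_sqrt_of_sq_le (hkey a h1 h2)
    exact (Real.le_sqrt hN0 (by positivity)).1 this
  by_cases hc : ‖ψ‖ ≤ (0 + 2) ^ 5 * ‖h‖
  · exact Or.inr hc
  left
  apply Real.le_sqrt_of_sq_le
  have hH := norm_nonneg h
  have hc' : 6 * ‖h‖ ≤ N := by norm_num at hc; linarith
  have h8 : N ^ 2 ≤ 8 * ε := by nlinarith
  have := norm_nonneg ψ
  nlinarith
end

section
/- There exist an absolute constant K < ∞ and, for each N ∈ ℕ, a constant C_N < ∞, with the following property. Let A and B be C*-algebras with A unital, let H be a complex Hilbert space and π : B → B(H) a nondegenerate representation, let ε ∈ (0,1], and let ψ : A → B be a self-adjoint bounded linear ε-order zero map such that h := ψ(1_A) is an algebraic element of B of degree at most N (i.e., Q(h) = 0 for some monic complex polynomial Q of degree at most N, evaluated in the unitization of B). Then there exist bounded linear maps ψ_s, ψ_r : A → B(H), both taking values in the double commutant π(B)'' of π(B), such that: (i) π∘ψ = ψ_s + ψ_r; (ii) ‖ψ_s‖ ≤ (6K+7)‖ψ‖^{4/5}ε^{1/16};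 (iii) there exists a projection q ∈ π(B)'' such that ψ_r takes values in the corner subalgebra C := q·D·q, where D is the norm-closure of {π(h)·b·π(h) : b ∈ π(B)''}; (iv) either ψ_r = 0, or there exists c ∈ C with c·ψ_r(1_A) = ψ_r(1_A)·c = q (so ψ_r(1_A) is invertible in C) such that the map x ↦ c·ψ_r(x) sends 1_A to q and is a δ-Jordan *-homomorphism with δ = 24(C_N²(K+2)^5 + 10C_N + 17)‖ψ‖ε^{1/16}. -/
/-- The double commutant of a subset of a ring. -/
def doubleCommutant {R : Type*} [Monoid R] (S : Set R) : Set R :=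
  Set.centralizer (Set.centralizer S)

/-- The corner `q·D·q` of a set `D` determined by `q`. -/
def cornerSet {R : Type*} [Mul R] (q : R) (D : Set R) : Set R :=
  {y : R | ∃ d ∈ D, y = q * d * q}

open Finset in
theorem jz_far {W : Type*} [NormedAddCommGroup W] [NormedSpace ℝ W] (w : ℕ → ℕ → W) (n : ℕ) (c : ℝ)
    (h : ∀ S T : Finset ℕ, S ⊆ range n → T ⊆ range n →
      (∀ i ∈ S, ∀ j ∈ T, i + 2 ≤ j ∨ j + 2 ≤ i) → ‖∑ i ∈ S, ∑ j ∈ T, w i j‖ ≤ c) :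
    ‖∑ i ∈ range n, ∑ j ∈ range n, if (i + 2 ≤ j ∨ j + 2 ≤ i) then w i j else 0‖ ≤ 16 * c := by
  set U := range (n + 2) with hU
  have key : (∑ S ∈ U.powerset, ∑ i ∈ (range n).filter (fun i => i + 1 ∈ S),
      ∑ j ∈ (range n).filter (fun j => j ∉ S ∧ j + 1 ∉ S ∧ j + 2 ∉ S), w i j)
      = ((2:ℝ) ^ (n + 2) / 16) •
        ∑ i ∈ range n, ∑ j ∈ range n, if (i + 2 ≤ j ∨ j + 2 ≤ i) then w i j else 0 := by
    simp only [sum_filter, smul_sum]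
    rw [sum_comm]
    refine sum_congr rfl fun i hi => ?_
    have : ∀ S : Finset ℕ, (if i + 1 ∈ S then
        ∑ j ∈ range n, (if j ∉ S ∧ j + 1 ∉ S ∧ j + 2 ∉ S then w i j else 0) else 0)
        = ∑ j ∈ range n, (if i + 1 ∈ S ∧ (j ∉ S ∧ j + 1 ∉ S ∧ j + 2 ∉ S) then w i j else 0) := by
      intro S
      by_cases hS : i + 1 ∈ S <;> simp [hS]
    simp only [this]
    rw [sum_comm]
    refine sum_congr rfl fun j hj => ?_
    rw [mem_range] at hi hj
    rw [← sum_filter, sum_const]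
    by_cases hf : (i + 2 ≤ j ∨ j + 2 ≤ i)
    · rw [if_pos hf]
      have he : (U.powerset).filter (fun S => i + 1 ∈ S ∧ (j ∉ S ∧ j + 1 ∉ S ∧ j + 2 ∉ S))
          = Icc {i + 1} (U \ {j, j + 1, j + 2}) := by
        ext S
        simp only [mem_filter, mem_powerset, mem_Icc, forall_eq,
          subset_iff, mem_sdiff, mem_insert, mem_singleton]
        constructor
        · rintro ⟨h1, h2, h3, h4, h5⟩
          refine ⟨h2, fun x hx => ⟨h1 hx, ?_⟩⟩
          rintro (rfl | rfl | rfl) <;> contradiction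
        · rintro ⟨h2, h3⟩
          refine ⟨fun x hx => (h3 hx).1, h2, ?_, ?_, ?_⟩ <;> intro hx <;> have := (h3 hx).2 <;> simp at this
      rw [he, card_Icc_finset, card_sdiff_of_subset, card_singleton]
      · rw [card_insert_of_notMem (by simp), card_insert_of_notMem (by simp), card_singleton, hU,
          card_range]
        obtain ⟨k, rfl⟩ : ∃ k, n = k + 2 := ⟨n - 2, by omega⟩
        rw [← Nat.cast_smul_eq_nsmul ℝ]
        congr 1
        have : k + 2 + 2 - (1 + 1 + 1) - 1 = k := by omega
        rw [this]; push_cast; ring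
      · intro x; simp [hU]; omega
      · simp [hU]; omega
    · rw [if_neg hf, smul_zero]
      rw [filter_false_of_mem, card_empty, zero_smul]
      rintro S - ⟨h1, h2, h3, h4⟩
      have : i + 1 = j ∨ i = j ∨ i = j + 1 := by omega
      rcases this with h | h | h
      · subst h; contradiction
      · subst h; contradiction
      · subst h; contradiction
  have hb : ‖((2:ℝ) ^ (n + 2) / 16) •
        ∑ i ∈ range n, ∑ j ∈ range n, (if (i + 2 ≤ j ∨ j + 2 ≤ i) then w i j else 0)‖
        ≤ 2 ^ (n + 2) * c := by
    rw [← key]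
    refine (norm_sum_le_of_le _ (f := _) (n := fun _ => c) ?_).trans ?_
    · intro S hS
      apply h _ _ (filter_subset _ _) (filter_subset _ _)
      intro i hi j hj
      simp only [mem_filter] at hi hj
      by_contra hcon
      have : i + 1 = j ∨ i = j ∨ i = j + 1 := by omega
      rcases this with h | h | h
      · subst h; exact hj.2.1 hi.2
      · subst h; exact hj.2.2.1 hi.2
      · subst h; exact hj.2.2.2 hi.2
    · simp [hU]
  rw [norm_smul, Real.norm_of_nonneg (by positivity)] at hb
  have : (0:ℝ) < 2 ^ (n + 2) := by positivity
  nlinarith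

open Finset in
theorem jz_diag {W : Type*} [NormedAddCommGroup W] [NormedSpace ℝ W] (w : ℕ → ℕ → W)
    (I : Finset ℕ) (c : ℝ)
    (h : ∀ S T : Finset ℕ, S ⊆ I → T ⊆ I → ‖∑ i ∈ S, ∑ j ∈ T, w i j‖ ≤ c) :
    ‖∑ i ∈ I, w i i‖ ≤ 4 * c := by
  have key : (∑ S ∈ I.powerset, ((∑ i ∈ I.filter (fun i => i ∈ S),
      ∑ j ∈ I.filter (fun j => j ∈ S), w i j) - (∑ i ∈ I.filter (fun i => i ∈ S),
      ∑ j ∈ I.filter (fun j => j ∉ S), w i j)))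
      = ((2:ℝ) ^ (I.card) / 2) • ∑ i ∈ I, w i i := by
    have e1 : ∀ i ∈ I, w i i = ∑ j ∈ I, if i = j then w i j else 0 := by
      intro i hi; simp [hi]
    rw [sum_congr rfl e1]
    rw [sum_sub_distrib]
    simp only [sum_filter, smul_sum]
    rw [sum_comm, sum_comm (s := I.powerset), ← sum_sub_distrib]
    refine sum_congr rfl fun i hi => ?_
    have : ∀ (S : Finset ℕ) (P : ℕ → Prop) [DecidablePred P], (if i ∈ S then
        ∑ j ∈ I, (if P j then w i j else 0) else 0)
        = ∑ j ∈ I, (if i ∈ S ∧ P j then w i j else 0) := by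
      intro S P _
      by_cases hS : i ∈ S <;> simp [hS]
    simp only [this]
    rw [sum_comm, sum_comm (s := I.powerset), ← sum_sub_distrib]
    refine sum_congr rfl fun j hj => ?_
    rw [← sum_filter, sum_const, ← sum_filter, sum_const]
    have hP : 0 < I.card := card_pos.2 ⟨i, hi⟩
    have hA : (I.powerset).filter (fun S => i ∈ S ∧ j ∈ S) = Icc {i, j} I := by
      ext S
      simp only [mem_filter, mem_powerset, mem_Icc,
          subset_iff, mem_insert, mem_singleton]
      constructor
      · rintro ⟨h1, h2, h3⟩
        exact ⟨by rintro x (rfl | rfl) <;> assumption, h1⟩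
      · rintro ⟨h1, h2⟩
        exact ⟨h2, h1 (Or.inl rfl), h1 (Or.inr rfl)⟩
    rw [hA, card_Icc_finset (by intro x; simp; rintro (rfl | rfl) <;> assumption)]
    by_cases hij : i = j
    · subst hij
      rw [filter_false_of_mem (p := fun S => i ∈ S ∧ i ∉ S) (by rintro S - ⟨h1, h2⟩; contradiction)]
      obtain ⟨k, hk⟩ : ∃ k, I.card = k + 1 := ⟨I.card - 1, by omega⟩
      simp only [card_empty, zero_smul, sub_zero, if_true, pair_eq_singleton, card_singleton, hk]
      rw [← Nat.cast_smul_eq_nsmul ℝ]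
      congr 1
      push_cast; rw [pow_succ]; simp
    · have hB : (I.powerset).filter (fun S => i ∈ S ∧ j ∉ S) = Icc {i} (I \ {j}) := by
        ext S
        simp only [mem_filter, mem_powerset, mem_Icc, forall_eq,
          subset_iff, mem_sdiff, mem_singleton]
        constructor
        · rintro ⟨h1, h2, h3⟩
          exact ⟨h2, fun x hx => ⟨h1 hx, by rintro rfl; contradiction⟩⟩
        · rintro ⟨h2, h3⟩
          exact ⟨fun x hx => (h3 hx).1, h2, fun hx => (h3 hx).2 rfl⟩
      rw [hB, card_Icc_finset (by simp [hi, hij]), card_sdiff_of_subset (by simp [hj]),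
        card_pair hij, card_singleton, card_singleton, if_neg hij, smul_zero]
      simp [Nat.sub_sub]
  have hb : ‖((2:ℝ) ^ (I.card) / 2) • ∑ i ∈ I, w i i‖ ≤ 2 ^ (I.card) * (c + c) := by
    rw [← key]
    refine (norm_sum_le_of_le _ (f := _) (n := fun _ => c + c) ?_).trans ?_
    · intro S hS
      refine (norm_sub_le _ _).trans (add_le_add ?_ ?_)
      · exact h _ _ (filter_subset _ _) (filter_subset _ _)
      · exact h _ _ (filter_subset _ _) (filter_subset _ _)
    · simp; linarith
  rw [norm_smul, Real.norm_of_nonneg (by positivity)] at hb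
  have : (0:ℝ) < 2 ^ (I.card) := by positivity
  nlinarith

open Finset in
theorem jz_pos_norm {A : Type*} [CStarAlgebra A] [PartialOrder A] [StarOrderedRing A]
    (E : ℕ → A) (n : ℕ) (hE : ∀ i, 0 ≤ E i) (hs : ∑ i ∈ range n, E i = 1)
    (S : Finset ℕ) (hS : S ⊆ range n) (a : ℕ → ℝ) (η : ℝ) (hη : 0 ≤ η)
    (ha : ∀ i, 0 ≤ a i) (ha' : ∀ i, a i ≤ η) :
    0 ≤ ∑ i ∈ S, a i • E i ∧ ‖∑ i ∈ S, a i • E i‖ ≤ η := by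
  have h0 : 0 ≤ ∑ i ∈ S, a i • E i := sum_nonneg fun i _ => smul_nonneg (ha i) (hE i)
  refine ⟨h0, ?_⟩
  rw [CStarAlgebra.norm_le_iff_le_algebraMap _ hη h0, Algebra.algebraMap_eq_smul_one, ← hs, smul_sum]
  calc ∑ i ∈ S, a i • E i ≤ ∑ i ∈ S, η • E i :=
        sum_le_sum fun i _ => smul_le_smul_of_nonneg_right (ha' i) (hE i)
    _ ≤ _ := sum_le_sum_of_subset_of_nonneg hS fun i _ _ => smul_nonneg hη (hE i)

open Finset in
theorem jz_split {A : Type*} [AddCommGroup A] [Module ℝ A] (E : ℕ → A) (S : Finset ℕ) (a : ℕ → ℝ) :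
    ∑ i ∈ S, a i • E i = (∑ i ∈ S, max (a i) 0 • E i) - ∑ i ∈ S, max (-a i) 0 • E i := by
  rw [← sum_sub_distrib]
  refine sum_congr rfl fun i _ => ?_
  rw [← sub_smul]
  congr 1
  rcases le_total 0 (a i) with h | h
  · rw [max_eq_left h, max_eq_right (by linarith)]; simp
  · rw [max_eq_right h, max_eq_left (by linarith)]; simp

open Finset in
theorem jz_norm {A : Type*} [CStarAlgebra A] [PartialOrder A] [StarOrderedRing A]
    (E : ℕ → A) (n : ℕ) (hE : ∀ i, 0 ≤ E i) (hs : ∑ i ∈ range n, E i = 1)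
    (S : Finset ℕ) (hS : S ⊆ range n) (a : ℕ → ℝ) (η : ℝ) (hη : 0 ≤ η)
    (ha : ∀ i, |a i| ≤ η) :
    ‖∑ i ∈ S, a i • E i‖ ≤ 2 * η := by
  rw [jz_split]
  refine (norm_sub_le _ _).trans ?_
  have h1 := (jz_pos_norm E n hE hs S hS (fun i => max (a i) 0) η hη (fun i => le_max_right _ _)
    (fun i => max_le ((le_abs_self _).trans (ha i)) hη)).2
  have h2 := (jz_pos_norm E n hE hs S hS (fun i => max (-a i) 0) η hη (fun i => le_max_right _ _)
    (fun i => max_le ((neg_le_abs _).trans (ha i)) hη)).2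
  linarith

open Finset in
theorem jz_pou {A W : Type*} [CStarAlgebra A] [PartialOrder A] [StarOrderedRing A]
    [NormedAddCommGroup W] [NormedSpace ℝ W] (φ : A →ₗ[ℝ] A →ₗ[ℝ] W) (ε M : ℝ) (hM : 0 ≤ M)
    (hε : 0 ≤ ε)
    (hφ : ∀ u v, ‖φ u v‖ ≤ M * ‖u‖ * ‖v‖)
    (hoz : ∀ u v : A, 0 ≤ u → 0 ≤ v → u * v = 0 → ‖φ u v‖ ≤ ε * ‖u‖ * ‖v‖)
    (E : ℕ → A) (n : ℕ) (hE : ∀ i, 0 ≤ E i) (hs : ∑ i ∈ range (n + 1), E i = 1)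
    (horth : ∀ i j, (i + 2 ≤ j ∨ j + 2 ≤ i) → E i * E j = 0)
    (a b : ℕ → ℝ) (ha : ∀ i, |a i| ≤ 1) (hb : ∀ i, |b i| ≤ 1) (η : ℝ) (hη : 0 ≤ η)
    (hab : ∀ i, |a i - a (i + 1)| ≤ η) :
    ‖φ (∑ i ∈ range (n + 1), a i • E i) (∑ j ∈ range (n + 1), b j • E j)
      - φ 1 (∑ j ∈ range (n + 1), (a j * b j) • E j)‖ ≤ 128 * ε + 32 * M * η := by
  have exp : ∀ (S T : Finset ℕ) (f g : ℕ → ℝ) (E F : ℕ → A),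
      φ (∑ i ∈ S, f i • E i) (∑ j ∈ T, g j • F j)
      = ∑ i ∈ S, ∑ j ∈ T, (f i * g j) • φ (E i) (F j) := by
    intro S T f g E F
    simp only [map_sum, LinearMap.sum_apply, map_smul, LinearMap.smul_apply, smul_smul, smul_sum]
    rw [sum_comm]
    refine sum_congr rfl fun i _ => sum_congr rfl fun j _ => ?_
    rw [mul_comm]
  -- order zero on separated sets
  have oz : ∀ (S T : Finset ℕ), S ⊆ range (n + 1) → T ⊆ range (n + 1) →
      (∀ i ∈ S, ∀ j ∈ T, i + 2 ≤ j ∨ j + 2 ≤ i) → ∀ f g : ℕ → ℝ, (∀ i, |f i| ≤ 1) →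
      (∀ i, |g i| ≤ 1) → ‖φ (∑ i ∈ S, f i • E i) (∑ j ∈ T, g j • E j)‖ ≤ 4 * ε := by
    intro S T hS hT hST f g hf hg
    have base : ∀ f g : ℕ → ℝ, (∀ i, 0 ≤ f i) → (∀ i, f i ≤ 1) → (∀ i, 0 ≤ g i) → (∀ i, g i ≤ 1) →
        ‖φ (∑ i ∈ S, f i • E i) (∑ j ∈ T, g j • E j)‖ ≤ ε := by
      intro f g hf hf' hg hg'
      obtain ⟨p1, p2⟩ := jz_pos_norm E _ hE hs S hS f 1 zero_le_one hf hf'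
      obtain ⟨q1, q2⟩ := jz_pos_norm E _ hE hs T hT g 1 zero_le_one hg hg'
      refine (hoz _ _ p1 q1 ?_).trans ?_
      · rw [sum_mul_sum]
        refine sum_eq_zero fun i hi => sum_eq_zero fun j hj => ?_
        rw [smul_mul_smul_comm, horth i j (hST i hi j hj), smul_zero]
      · calc ε * _ * _ ≤ ε * 1 * 1 := by gcongr
          _ = ε := by ring
    have P : ∀ f : ℕ → ℝ, (∀ i, |f i| ≤ 1) → (∀ i, 0 ≤ max (f i) 0) ∧ (∀ i, max (f i) 0 ≤ 1) ∧
        (∀ i, 0 ≤ max (-f i) 0) ∧ (∀ i, max (-f i) 0 ≤ 1) := fun f hf =>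
      ⟨fun i => le_max_right _ _, fun i => max_le ((le_abs_self _).trans (hf i)) zero_le_one,
        fun i => le_max_right _ _, fun i => max_le ((neg_le_abs _).trans (hf i)) zero_le_one⟩
    obtain ⟨f1, f2, f3, f4⟩ := P f hf
    obtain ⟨g1, g2, g3, g4⟩ := P g hg
    rw [jz_split E S f, jz_split E T g]
    simp only [map_sub, LinearMap.sub_apply]
    have b1 := base _ _ f1 f2 g1 g2
    have b2 := base _ _ f1 f2 g3 g4
    have b3 := base _ _ f3 f4 g1 g2
    have b4 := base _ _ f3 f4 g3 g4
    refine (norm_sub_le _ _).trans ?_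
    refine (add_le_add (norm_sub_le _ _) (norm_sub_le _ _)).trans ?_
    linarith
  set w : ℕ → ℕ → W := fun i j => ((a i - a j) * b j) • φ (E i) (E j) with hw
  have hab1 : ∀ i, |a i * b i| ≤ 1 := fun i => by
    rw [abs_mul]; exact mul_le_one₀ (ha i) (abs_nonneg _) (hb i)
  have wsum : ∀ S T : Finset ℕ, ∑ i ∈ S, ∑ j ∈ T, w i j =
      φ (∑ i ∈ S, a i • E i) (∑ j ∈ T, b j • E j) -
      φ (∑ i ∈ S, (1:ℝ) • E i) (∑ j ∈ T, (a j * b j) • E j) := by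
    intro S T
    rw [exp, exp, ← sum_sub_distrib]
    refine sum_congr rfl fun i _ => ?_
    rw [← sum_sub_distrib]
    refine sum_congr rfl fun j _ => ?_
    rw [← sub_smul]
    simp only [hw]
    congr 1; ring
  have tot : φ (∑ i ∈ range (n + 1), a i • E i) (∑ j ∈ range (n + 1), b j • E j)
      - φ 1 (∑ j ∈ range (n + 1), (a j * b j) • E j)
      = ∑ i ∈ range (n + 1), ∑ j ∈ range (n + 1), w i j := by
    rw [wsum]; simp only [one_smul]; rw [hs]
  have far := jz_far w (n + 1) (8 * ε) (by
    intro S T hS hT hST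
    rw [wsum]
    have h1 := oz S T hS hT hST a b ha hb
    have h2 := oz S T hS hT hST (fun _ => 1) (fun j => a j * b j) (by simp) hab1
    refine (norm_sub_le _ _).trans ?_
    linarith)
  have nb : ∀ (S T : Finset ℕ) (f g : ℕ → ℝ), S ⊆ range (n + 1) → T ⊆ range (n + 1) →
      (∀ i, |f i| ≤ η) → (∀ i, |g i| ≤ 1) →
      ‖φ (∑ i ∈ S, f i • E i) (∑ j ∈ T, g j • E j)‖ ≤ 4 * M * η := by
    intro S T f g hS hT hf hg
    have h1 := jz_norm E _ hE hs S hS f η hη hf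
    have h2 := jz_norm E _ hE hs T hT g 1 zero_le_one hg
    calc _ ≤ _ := hφ _ _
      _ ≤ M * (2 * η) * (2 * 1) := by gcongr
      _ = _ := by ring
  have im : ∀ (T : Finset ℕ), T ⊆ range n → T.image (· + 1) ⊆ range (n + 1) := by
    intro T hT x hx
    simp only [mem_image] at hx
    obtain ⟨y, hy, rfl⟩ := hx
    have := mem_range.1 (hT hy)
    simp [this]
  have mon : ∀ (T : Finset ℕ), T ⊆ range n → T ⊆ range (n + 1) := fun T hT =>
    hT.trans (range_mono (Nat.le_succ n))
  have n1 := jz_diag (fun i k => ((a i - a (i + 1)) * b (k + 1)) • φ (E i) (E (k + 1))) (range n)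
    (4 * M * η) (by
      intro S T hS hT
      rw [← exp S T (fun i => a i - a (i + 1)) (fun k => b (k + 1)) E (fun k => E (k + 1))]
      have := nb S (T.image (· + 1)) (fun i => a i - a (i + 1)) b (mon S hS) (im T hT) hab hb
      rwa [sum_image (by intro x _ y _; simp)] at this)
  have n2 := jz_diag (fun i k => ((a (i + 1) - a i) * b k) • φ (E (i + 1)) (E k)) (range n)
    (4 * M * η) (by
      intro S T hS hT
      rw [← exp S T (fun i => a (i + 1) - a i) b (fun i => E (i + 1)) E]
      have := nb (S.image (· + 1)) T (fun i => a i - a (i - 1)) b (im S hS) (mon T hT) (by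
        intro i
        rcases i with _ | i
        · simpa using hη
        · simpa [abs_sub_comm] using hab i) hb
      rw [sum_image (by intro x _ y _; simp)] at this
      simpa using this)
  have dec : ∑ i ∈ range (n + 1), ∑ j ∈ range (n + 1), w i j =
      (∑ i ∈ range (n + 1), ∑ j ∈ range (n + 1), if (i + 2 ≤ j ∨ j + 2 ≤ i) then w i j else 0)
      + (∑ i ∈ range n, w i (i + 1)) + (∑ i ∈ range n, w (i + 1) i) := by
    have e1 : ∑ i ∈ range n, w i (i + 1) =
        ∑ i ∈ range (n + 1), ∑ j ∈ range (n + 1), if i + 1 = j then w i j else 0 := by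
      simp only [sum_ite_eq, mem_range]
      rw [sum_range_succ, if_neg (by omega), add_zero]
      refine sum_congr rfl fun i hi => ?_
      rw [if_pos (by have := mem_range.1 hi; omega)]
    have e2 : ∑ i ∈ range n, w (i + 1) i =
        ∑ i ∈ range (n + 1), ∑ j ∈ range (n + 1), if j + 1 = i then w i j else 0 := by
      rw [sum_comm]
      simp only [sum_ite_eq, mem_range]
      rw [sum_range_succ, if_neg (by omega), add_zero]
      refine sum_congr rfl fun i hi => ?_
      rw [if_pos (by have := mem_range.1 hi; omega)]
    rw [e1, e2, ← sum_add_distrib, ← sum_add_distrib]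
    refine sum_congr rfl fun i _ => ?_
    rw [← sum_add_distrib, ← sum_add_distrib]
    refine sum_congr rfl fun j _ => ?_
    by_cases h1 : i = j
    · subst h1; simp [hw]
    · by_cases h2 : i + 1 = j
      · rw [if_neg (by omega), if_pos h2, if_neg (by omega)]; simp
      · by_cases h3 : j + 1 = i
        · rw [if_neg (by omega), if_neg h2, if_pos h3]; simp
        · rw [if_pos (by omega), if_neg h2, if_neg h3]; simp
  rw [tot, dec]
  refine (norm_add_le _ _).trans ?_
  refine (add_le_add (norm_add_le _ _) le_rfl).trans ?_
  refine (add_le_add (add_le_add far n1) n2).trans ?_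
  linarith

/-- clamp functions used for the partition of unity -/
noncomputable def jzG (n k : ℕ) (t : ℝ) : ℝ := max 0 (min 1 ((n : ℝ) * ((t + 1) / 2) + 1 - k))

/-- hat functions -/
noncomputable def jzE (n k : ℕ) (t : ℝ) : ℝ := jzG n k t - jzG n (k + 1) t

theorem jzE_cont (n k : ℕ) : Continuous (jzE n k) := by
  unfold jzE jzG; fun_prop

theorem jzE_nonneg (n k : ℕ) (t : ℝ) : 0 ≤ jzE n k t := by
  unfold jzE jzG
  rw [sub_nonneg]
  apply max_le_max le_rfl
  apply min_le_min le_rfl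
  push_cast; linarith

theorem jzE_supp (n k : ℕ) (t : ℝ) (h : jzE n k t ≠ 0) :
    |(n : ℝ) * ((t + 1) / 2) - k| < 1 := by
  by_contra hc
  apply h
  unfold jzE jzG
  push_cast
  rcases le_abs.1 (not_lt.1 hc) with h1 | h1
  · rw [min_eq_left (by linarith), min_eq_left (by linarith)]; simp
  · rw [max_eq_left ((min_le_right _ _).trans (by linarith)),
      max_eq_left ((min_le_right _ _).trans (by linarith))]; simp

theorem jzE_sum (n : ℕ) (t : ℝ) (h1 : -1 ≤ t) (h2 : t ≤ 1) :
    ∑ k ∈ Finset.range (n + 1), jzE n k t = 1 := by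
  unfold jzE
  rw [Finset.sum_range_sub']
  unfold jzG
  have hn : (0:ℝ) ≤ n := Nat.cast_nonneg n
  have a1 : 0 ≤ (n:ℝ) * ((t + 1) / 2) := mul_nonneg hn (by linarith)
  have a2 : (n:ℝ) * ((t + 1) / 2) ≤ n := mul_le_of_le_one_right hn (by linarith)
  push_cast
  rw [min_eq_left (by linarith), max_eq_right (by norm_num),
    max_eq_left ((min_le_right _ _).trans (by linarith))]
  simp

theorem jzE_orth (n i j : ℕ) (h : i + 2 ≤ j ∨ j + 2 ≤ i) (t : ℝ) : jzE n i t * jzE n j t = 0 := by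
  by_contra hc
  have h1 := jzE_supp n i t (left_ne_zero_of_mul hc)
  have h2 := jzE_supp n j t (right_ne_zero_of_mul hc)
  rw [abs_lt] at h1 h2
  rcases h with h | h
  · have : (i:ℝ) + 2 ≤ j := by exact_mod_cast h
    linarith
  · have : (j:ℝ) + 2 ≤ i := by exact_mod_cast h
    linarith

/-- nodes -/
noncomputable def jzT (n k : ℕ) : ℝ := 2 * ((min k n : ℕ) : ℝ) / n - 1

theorem jzT_abs (n k : ℕ) (hn : 0 < n) : |jzT n k| ≤ 1 := by
  have hn' : (0:ℝ) < n := by exact_mod_cast hn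
  have h1 : ((min k n : ℕ) : ℝ) ≤ n := by exact_mod_cast min_le_right _ _
  have h2 : ((min k n : ℕ) : ℝ) / n ≤ 1 := (div_le_one hn').2 h1
  have h3 : 0 ≤ ((min k n : ℕ) : ℝ) / n := by positivity
  unfold jzT
  rw [mul_div_assoc, abs_le]
  constructor <;> linarith

theorem jzT_step (n k : ℕ) (hn : 0 < n) : |jzT n k - jzT n (k + 1)| ≤ 2 / n := by
  have hn' : (0:ℝ) < n := by exact_mod_cast hn
  unfold jzT
  rw [sub_sub_sub_cancel_right, ← sub_div, abs_div, abs_of_pos hn']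
  gcongr
  rcases le_or_gt n k with h | h
  · rw [min_eq_right h, min_eq_right (by omega)]; simp
  · rw [min_eq_left h.le, min_eq_left (by omega), abs_le]; push_cast; constructor <;> linarith

theorem jzT_near (n k : ℕ) (hn : 0 < n) (hk : k ≤ n) (t : ℝ) (h : jzE n k t ≠ 0) :
    |t - jzT n k| ≤ 2 / n := by
  have hn' : (0:ℝ) < n := by exact_mod_cast hn
  have := jzE_supp n k t h
  unfold jzT
  rw [min_eq_left hk]
  have e : t - (2 * (k:ℝ) / n - 1) = (2 / n) * ((n : ℝ) * ((t + 1) / 2) - k) := by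
    field_simp; ring
  rw [e, abs_mul, abs_of_pos (by positivity : (0:ℝ) < 2 / n)]
  exact mul_le_of_le_one_right (by positivity) this.le

theorem jz_fun_approx (n : ℕ) (f : ℝ → ℝ) (L : ℝ) (hn : 0 < n)
    (t : ℝ) (h1 : -1 ≤ t) (h2 : t ≤ 1) (hL : ∀ s, |s| ≤ 1 → |f t - f s| ≤ L * |t - s|)
    (hL0 : 0 ≤ L) :
    |f t - ∑ k ∈ Finset.range (n + 1), f (jzT n k) * jzE n k t| ≤ L * (2 / n) := by
  have e : f t - ∑ k ∈ Finset.range (n + 1), f (jzT n k) * jzE n k t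
      = ∑ k ∈ Finset.range (n + 1), (f t - f (jzT n k)) * jzE n k t := by
    simp only [sub_mul, Finset.sum_sub_distrib]
    rw [← Finset.mul_sum, jzE_sum n t h1 h2, mul_one]
  rw [e]
  calc _ ≤ ∑ k ∈ Finset.range (n + 1), |(f t - f (jzT n k)) * jzE n k t| :=
        Finset.abs_sum_le_sum_abs _ _
    _ ≤ ∑ k ∈ Finset.range (n + 1), (L * (2 / n)) * jzE n k t := by
        refine Finset.sum_le_sum fun k hk => ?_
        rw [abs_mul, abs_of_nonneg (jzE_nonneg n k t)]
        by_cases h0 : jzE n k t = 0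
        · simp [h0]
        · have hk' : k ≤ n := by have := Finset.mem_range.1 hk; omega
          refine mul_le_mul_of_nonneg_right ?_ (jzE_nonneg n k t)
          exact (hL _ (jzT_abs n k hn)).trans
            (mul_le_mul_of_nonneg_left (jzT_near n k hn hk' t h0) hL0)
    _ = _ := by rw [← Finset.mul_sum, jzE_sum n t h1 h2, mul_one]

theorem jz_cfc_approx {A : Type*} [CStarAlgebra A]
    (x : A) (_hx : IsSelfAdjoint x) (hx1 : ‖x‖ ≤ 1) (n : ℕ) (hn : 0 < n) (f : ℝ → ℝ)
    (hf : Continuous f) (L : ℝ) (hL0 : 0 ≤ L)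
    (hL : ∀ s t, |s| ≤ 1 → |t| ≤ 1 → |f t - f s| ≤ L * |t - s|) :
    ‖cfc f x - ∑ k ∈ Finset.range (n + 1), f (jzT n k) • cfc (jzE n k) x‖ ≤ L * (2 / n) := by
  have hc : ∀ k, Continuous (jzE n k) := jzE_cont n
  have e : ∑ k ∈ Finset.range (n + 1), f (jzT n k) • cfc (jzE n k) x
      = cfc (fun t => ∑ k ∈ Finset.range (n + 1), f (jzT n k) * jzE n k t) x := by
    have := cfc_sum (fun k t => f (jzT n k) * jzE n k t) x (Finset.range (n + 1))
      (fun i _ => ((hc i).const_mul _ |>.continuousOn))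
    rw [Finset.sum_fn] at this
    rw [this]
    refine Finset.sum_congr rfl fun k _ => ?_
    rw [cfc_const_mul _ _ _ (hc k).continuousOn]
  rw [e, ← cfc_sub _ _ _ hf.continuousOn
    (continuous_finsetSum _ fun k _ => (hc k).const_mul _).continuousOn]
  refine norm_cfc_le (by positivity) fun t ht => ?_
  have ht1 : |t| ≤ 1 := by
    have := spectrum.norm_le_norm_mul_of_mem ht
    rcases subsingleton_or_nontrivial A with h | h
    · exact absurd ht (by simp [spectrum.of_subsingleton])
    · simp at this; exact this.trans hx1
  exact jz_fun_approx n f L hn t (abs_le.1 ht1).1 (abs_le.1 ht1).2 (fun s hs => hL s t hs ht1) hL0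

theorem jz_main1 {A W : Type*} [CStarAlgebra A] [PartialOrder A] [StarOrderedRing A]
    [NormedAddCommGroup W] [NormedSpace ℝ W] (φ : A →ₗ[ℝ] A →ₗ[ℝ] W) (ε M : ℝ) (hM : 0 ≤ M)
    (hε : 0 ≤ ε)
    (hφ : ∀ u v, ‖φ u v‖ ≤ M * ‖u‖ * ‖v‖)
    (hoz : ∀ u v : A, 0 ≤ u → 0 ≤ v → u * v = 0 → ‖φ u v‖ ≤ ε * ‖u‖ * ‖v‖)
    (x : A) (hx : IsSelfAdjoint x) (hx1 : ‖x‖ ≤ 1) :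
    ‖φ x x - φ 1 (x * x)‖ ≤ 128 * ε ∧ ‖φ x 1 - φ 1 x‖ ≤ 128 * ε := by
  have h1 : ‖(1:A)‖ ≤ 1 := by
    rcases subsingleton_or_nontrivial A with h | h
    · rw [Subsingleton.elim (1:A) 0]; simp
    · simp
  have hlim : ∀ c d : ℝ, Filter.Tendsto (fun n : ℕ => c + d * (2 / (n:ℝ))) Filter.atTop (nhds c) := by
    intro c d
    have := (tendsto_const_div_atTop_nhds_zero_nat 2).const_mul d |>.const_add c
    simpa using this
  have hsp : ∀ t ∈ spectrum ℝ x, |t| ≤ 1 := by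
    intro t ht
    have := spectrum.norm_le_norm_mul_of_mem ht
    rcases subsingleton_or_nontrivial A with h | h
    · exact absurd ht (by simp [spectrum.of_subsingleton])
    · simp at this; exact this.trans hx1
  have common : ∀ n : ℕ, 0 < n →
      (∀ i, 0 ≤ cfc (jzE n i) x) ∧ (∑ i ∈ Finset.range (n + 1), cfc (jzE n i) x = 1) ∧
      (∀ i j, (i + 2 ≤ j ∨ j + 2 ≤ i) → cfc (jzE n i) x * cfc (jzE n j) x = 0) := by
    intro n hn
    refine ⟨fun i => cfc_nonneg fun t _ => jzE_nonneg n i t, ?_, ?_⟩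
    · rw [← cfc_sum _ _ _ (fun i _ => (jzE_cont n i).continuousOn), Finset.sum_fn]
      rw [← cfc_const_one ℝ x]
      refine cfc_congr fun t ht => ?_
      have := hsp t ht
      exact jzE_sum n t (abs_le.1 this).1 (abs_le.1 this).2
    · intro i j hij
      rw [← cfc_mul _ _ _ (jzE_cont n i).continuousOn (jzE_cont n j).continuousOn]
      rw [← cfc_const_zero ℝ x]
      exact cfc_congr fun t _ => jzE_orth n i j hij t
  have ax : ∀ n : ℕ, 0 < n →
      ‖x - ∑ k ∈ Finset.range (n + 1), jzT n k • cfc (jzE n k) x‖ ≤ 2 / n := by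
    intro n hn
    have := jz_cfc_approx x hx hx1 n hn (fun t => t) continuous_id 1 zero_le_one (by simp)
    rwa [cfc_id' ℝ x, one_mul] at this
  have ax2 : ∀ n : ℕ, 0 < n →
      ‖x * x - ∑ k ∈ Finset.range (n + 1), (jzT n k * jzT n k) • cfc (jzE n k) x‖ ≤ 2 * (2 / n) := by
    intro n hn
    have := jz_cfc_approx x hx hx1 n hn (fun t => t * t) (by fun_prop) 2 zero_le_two (by
      intro s t hs ht
      have : t * t - s * s = (t + s) * (t - s) := by ring
      rw [this, abs_mul]
      refine mul_le_mul_of_nonneg_right ?_ (abs_nonneg _)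
      exact (abs_add_le t s).trans (by linarith))
    rwa [cfc_mul (fun t : ℝ => t) (fun t : ℝ => t) x continuousOn_id continuousOn_id, cfc_id' ℝ x] at this
  have nx : ∀ n : ℕ, 0 < n → ‖∑ k ∈ Finset.range (n + 1), jzT n k • cfc (jzE n k) x‖ ≤ 2 := by
    intro n hn
    obtain ⟨c1, c2, c3⟩ := common n hn
    simpa using jz_norm _ (n + 1) c1 c2 _ (subset_refl _) (jzT n) 1 zero_le_one
      (fun i => jzT_abs n i hn)
  constructor
  · refine ge_of_tendsto (hlim (128 * ε) (32 * M + M + 2 * M + 2 * M)) ?_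
    filter_upwards [Filter.eventually_gt_atTop 0] with n hn
    obtain ⟨c1, c2, c3⟩ := common n hn
    have main := jz_pou φ ε M hM hε hφ hoz (fun i => cfc (jzE n i) x) n c1 c2 c3 (jzT n) (jzT n)
      (fun i => jzT_abs n i hn) (fun i => jzT_abs n i hn) (2 / n) (by positivity)
      (fun i => jzT_step n i hn)
    have a1 := ax n hn
    have a2 := ax2 n hn
    have a3 := nx n hn
    set y := ∑ k ∈ Finset.range (n + 1), jzT n k • cfc (jzE n k) x
    set z := ∑ k ∈ Finset.range (n + 1), (jzT n k * jzT n k) • cfc (jzE n k) x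
    have e : φ x x - φ 1 (x * x) = (φ y y - φ 1 z) + φ x (x - y) + φ (x - y) y - φ 1 (x * x - z) := by
      simp only [map_sub, LinearMap.sub_apply]; abel
    rw [e]
    have b1 : ‖φ x (x - y)‖ ≤ M * 1 * (2 / n) := (hφ _ _).trans (by gcongr)
    have b2 : ‖φ (x - y) y‖ ≤ M * (2 / n) * 2 := (hφ _ _).trans (by gcongr)
    have b3 : ‖φ 1 (x * x - z)‖ ≤ M * 1 * (2 * (2 / n)) := (hφ _ _).trans (by gcongr)
    refine (norm_sub_le _ _).trans ?_
    refine (add_le_add (norm_add₃_le) le_rfl).trans ?_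
    linarith
  · refine ge_of_tendsto (hlim (128 * ε) (32 * M + M + M)) ?_
    filter_upwards [Filter.eventually_gt_atTop 0] with n hn
    obtain ⟨c1, c2, c3⟩ := common n hn
    have main := jz_pou φ ε M hM hε hφ hoz (fun i => cfc (jzE n i) x) n c1 c2 c3 (jzT n) (fun _ => 1)
      (fun i => jzT_abs n i hn) (by simp) (2 / n) (by positivity)
      (fun i => jzT_step n i hn)
    simp only [mul_one, one_smul, c2] at main
    have a1 := ax n hn
    set y := ∑ k ∈ Finset.range (n + 1), jzT n k • cfc (jzE n k) x
    have e : φ x 1 - φ 1 x = (φ y 1 - φ 1 y) + φ (x - y) 1 - φ 1 (x - y) := by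
      simp only [map_sub, LinearMap.sub_apply]; abel
    rw [e]
    have b1 : ‖φ (x - y) 1‖ ≤ M * (2 / n) * 1 := (hφ _ _).trans (by gcongr)
    have b2 : ‖φ 1 (x - y)‖ ≤ M * 1 * (2 / n) := (hφ _ _).trans (by gcongr)
    refine (norm_sub_le _ _).trans ?_
    refine (add_le_add (norm_add_le _ _) le_rfl).trans ?_
    linarith

theorem jz_alg1 {A B : Type*} [CStarAlgebra A] [PartialOrder A] [StarOrderedRing A]
    [NonUnitalCStarAlgebra B] (ε : ℝ) (hε : 0 ≤ ε) (ψ : A →L[ℂ] B) (hoz : IsEpsOrderZero ε ψ)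
    (x : A) (hx : IsSelfAdjoint x) :
    ‖ψ x * ψ x - ψ 1 * ψ (x * x)‖ ≤ 128 * ε * ‖x‖ ^ 2 ∧
    ‖ψ x * ψ 1 - ψ 1 * ψ x‖ ≤ 128 * ε * ‖x‖ := by
  let ψR : A →ₗ[ℝ] B := (ψ : A →ₗ[ℂ] B).restrictScalars ℝ
  let φ : A →ₗ[ℝ] A →ₗ[ℝ] B := (LinearMap.mul ℝ B).compl₁₂ ψR ψR
  have hφ : ∀ u v, φ u v = ψ u * ψ v := fun u v => rfl
  have key := jz_main1 φ ε (‖ψ‖ * ‖ψ‖) (by positivity) hε (by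
    intro u v
    rw [hφ]
    calc _ ≤ ‖ψ u‖ * ‖ψ v‖ := norm_mul_le _ _
      _ ≤ (‖ψ‖ * ‖u‖) * (‖ψ‖ * ‖v‖) := by gcongr <;> exact ψ.le_opNorm _
      _ = _ := by ring) (fun u v hu hv huv => by rw [hφ]; exact hoz u v hu hv huv)
  simp only [hφ] at key
  by_cases h0 : x = 0
  · subst h0; simp
  have hn : 0 < ‖x‖ := norm_pos_iff.2 h0
  set r : ℂ := ((‖x‖ : ℝ) : ℂ) with hr
  have hr0 : r ≠ 0 := by rw [hr]; exact_mod_cast hn.ne'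
  have hrn : ‖r‖ = ‖x‖ := by rw [hr]; simp
  set y : A := r⁻¹ • x with hy
  have hxy : x = r • y := by rw [hy, smul_smul, mul_inv_cancel₀ hr0, one_smul]
  have hysa : IsSelfAdjoint y := by
    rw [hy, isSelfAdjoint_iff, star_smul, hx.star_eq, hr]; simp
  have hyn : ‖y‖ ≤ 1 := by
    rw [hy, norm_smul, norm_inv, hrn, inv_mul_cancel₀ hn.ne']
  obtain ⟨k1, k2⟩ := key y hysa hyn
  constructor
  · have : ψ x * ψ x - ψ 1 * ψ (x * x) = (r * r) • (ψ y * ψ y - ψ 1 * ψ (y * y)) := by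
      rw [hxy]
      simp only [map_smul, smul_mul_assoc, mul_smul_comm, smul_sub, smul_smul]
    rw [this, norm_smul, norm_mul, hrn]
    calc _ ≤ ‖x‖ * ‖x‖ * (128 * ε) := by gcongr
      _ = _ := by ring
  · have : ψ x * ψ 1 - ψ 1 * ψ x = r • (ψ y * ψ 1 - ψ 1 * ψ y) := by
      rw [hxy]
      simp only [map_smul, smul_mul_assoc, mul_smul_comm, smul_sub]
    rw [this, norm_smul, hrn]
    calc _ ≤ ‖x‖ * (128 * ε) := by gcongr
      _ = _ := by ring

theorem jz_decomp {A : Type*} [CStarAlgebra A] (x : A) : ∃ a b : A, IsSelfAdjoint a ∧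
    IsSelfAdjoint b ∧ ‖a‖ ≤ ‖x‖ ∧ ‖b‖ ≤ ‖x‖ ∧ x = a + Complex.I • b :=
  ⟨realPart x, imaginaryPart x, (realPart x).2, (imaginaryPart x).2, realPart.norm_le x,
    imaginaryPart.norm_le x, (realPart_add_I_smul_imaginaryPart x).symm⟩

theorem jz_alg2 {A B : Type*} [CStarAlgebra A] [PartialOrder A] [StarOrderedRing A]
    [NonUnitalCStarAlgebra B] (ε : ℝ) (hε : 0 ≤ ε) (ψ : A →L[ℂ] B) (hoz : IsEpsOrderZero ε ψ)
    (x : A) :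
    ‖ψ x * ψ x - ψ 1 * ψ (x * x)‖ ≤ 1024 * ε * ‖x‖ ^ 2 ∧
    ‖ψ 1 * ψ x - ψ x * ψ 1‖ ≤ 256 * ε * ‖x‖ := by
  obtain ⟨a, b, ha, hb, han, hbn, hx⟩ := jz_decomp x
  obtain ⟨a1, a2⟩ := jz_alg1 ε hε ψ hoz a ha
  obtain ⟨b1, b2⟩ := jz_alg1 ε hε ψ hoz b hb
  obtain ⟨c1, -⟩ := jz_alg1 ε hε ψ hoz (a + b) (ha.add hb)
  have a1' : 128 * ε * ‖a‖ ^ 2 ≤ 128 * ε * ‖x‖ ^ 2 := by gcongr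
  have b1' : 128 * ε * ‖b‖ ^ 2 ≤ 128 * ε * ‖x‖ ^ 2 := by gcongr
  have hcn : ‖a + b‖ ≤ 2 * ‖x‖ := (norm_add_le _ _).trans (by linarith)
  have c1' : 128 * ε * ‖a + b‖ ^ 2 ≤ 128 * ε * (2 * ‖x‖) ^ 2 := by gcongr
  constructor
  · set J : A → B := fun x => ψ x * ψ x - ψ 1 * ψ (x * x) with hJ
    have e : J x = J a - J b + Complex.I • (J (a + b) - J a - J b) := by
      simp only [hJ]
      rw [hx]
      simp only [map_add, map_smul, mul_add, add_mul, smul_mul_assoc, mul_smul_comm, smul_add,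
        smul_sub, smul_smul, Complex.I_mul_I, neg_smul, one_smul, map_neg, mul_neg]
      abel
    change ‖J x‖ ≤ _
    rw [e]
    change ‖J a‖ ≤ _ at a1
    change ‖J b‖ ≤ _ at b1
    change ‖J (a + b)‖ ≤ _ at c1
    have i1 := norm_add_le (J a - J b) (Complex.I • (J (a + b) - J a - J b))
    rw [norm_smul, Complex.norm_I, one_mul] at i1
    have i2 := norm_sub_le (J a) (J b)
    have i3 := norm_sub_le (J (a + b) - J a) (J b)
    have i4 := norm_sub_le (J (a + b)) (J a)
    nlinarith
  · have e : ψ 1 * ψ x - ψ x * ψ 1 = -(ψ a * ψ 1 - ψ 1 * ψ a) - Complex.I • (ψ b * ψ 1 - ψ 1 * ψ b) := by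
      rw [hx]
      simp only [map_add, map_smul, mul_add, add_mul, smul_mul_assoc, mul_smul_comm, smul_sub]
      abel
    rw [e]
    refine (norm_sub_le _ _).trans ?_
    rw [norm_neg, norm_smul, Complex.norm_I, one_mul]
    have a2' : 128 * ε * ‖a‖ ≤ 128 * ε * ‖x‖ := by gcongr
    have b2' : 128 * ε * ‖b‖ ≤ 128 * ε * ‖x‖ := by gcongr
    linarith

theorem jz_proj_norm {R : Type*} [CStarAlgebra R] (p : R) (hp : star p = p) (hpp : p * p = p) :
    ‖p‖ ≤ 1 := by
  have := CStarRing.norm_star_mul_self (x := p)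
  rw [hp, hpp] at this
  by_contra h
  push Not at h
  nlinarith

theorem jz_corner {A R : Type*} [CStarAlgebra A] [CStarAlgebra R] (Ψ : A →ₗ[ℂ] R)
    (hstar : ∀ x, Ψ (star x) = star (Ψ x)) (M ε : ℝ) (hM : 0 ≤ M) (hε : 0 ≤ ε)
    (hΨ : ∀ x, ‖Ψ x‖ ≤ M * ‖x‖) (a : R)
    (hj : ∀ x, IsSelfAdjoint x → ‖Ψ x * Ψ x - a * Ψ (x * x)‖ ≤ 128 * ε * ‖x‖ ^ 2)
    (hj' : ∀ x, ‖Ψ x * Ψ x - a * Ψ (x * x)‖ ≤ 1024 * ε * ‖x‖ ^ 2)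
    (hc : ∀ x, ‖a * Ψ x - Ψ x * a‖ ≤ 256 * ε * ‖x‖)
    (p c : R) (t g : ℝ) (ht : 0 ≤ t) (hg : 0 < g) (hp : star p = p) (hpp : p * p = p)
    (hcs : star c = c) (hcp : c * p = c) (hpc : p * c = c) (hca : c * a = p) (hac : a * c = p)
    (hpa : p * a = a * p) (hcn : ‖c‖ * (t + g) ≤ 1) (hat : ‖a * (1 - p)‖ ≤ t) :
    (∀ r, 0 ≤ r → t * M + 128 * ε ≤ r ^ 2 → ∀ x, ‖Ψ x - p * Ψ x * p‖ ≤ 4 * r * ‖x‖) ∧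
    (∀ x, ‖c * (p * Ψ (star x) * p) - star (c * (p * Ψ x * p))‖ ≤ ‖c‖ ^ 2 * (256 * ε) * ‖x‖) ∧
    (∀ x, ‖(c * (p * Ψ x * p)) * (c * (p * Ψ x * p)) - c * (p * Ψ (x * x) * p)‖ ≤
      (‖c‖ ^ 3 * (256 * ε * M) + ‖c‖ ^ 2 * (256 * ε / g * M) + ‖c‖ ^ 2 * (1024 * ε)) * ‖x‖ ^ 2) := by
  have hp1 := jz_proj_norm p hp hpp
  have hq1 : ‖1 - p‖ ≤ 1 := jz_proj_norm (1 - p) (by simp [hp]) (by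
    simp [mul_sub, sub_mul, hpp])
  have hqa : (1 - p) * a = a * (1 - p) := by rw [sub_mul, mul_sub, hpa]; simp
  have hqq : (1 - p) * (1 - p) = 1 - p := by simp [mul_sub, sub_mul, hpp]
  refine ⟨?_, ?_, ?_⟩
  · intro r hr htr
    have sa : ∀ x, IsSelfAdjoint x → ‖Ψ x - p * Ψ x * p‖ ≤ 2 * r * ‖x‖ := by
      intro x hx
      have hy : star (Ψ x) = Ψ x := by rw [← hstar, hx.star_eq]
      have h1 : ‖Ψ x * (1 - p)‖ ≤ r * ‖x‖ := by
        refine (sq_le_sq₀ (norm_nonneg _) (by positivity)).1 ?_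
        have e := CStarRing.norm_star_mul_self (x := Ψ x * (1 - p))
        rw [sq, ← e, star_mul, hy]
        have hq : star (1 - p) = 1 - p := by simp [hp]
        rw [hq]
        have e2 : (1 - p) * Ψ x * (Ψ x * (1 - p)) =
            (1 - p) * (Ψ x * Ψ x - a * Ψ (x * x)) * (1 - p)
            + (a * (1 - p)) * Ψ (x * x) * (1 - p) := by
          rw [← hqa]; noncomm_ring
        rw [e2]
        have n1 : ‖(1 - p) * (Ψ x * Ψ x - a * Ψ (x * x)) * (1 - p)‖
            ≤ 1 * (128 * ε * ‖x‖ ^ 2) * 1 := by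
          refine (norm_mul_le _ _).trans ?_
          refine mul_le_mul ((norm_mul_le _ _).trans ?_) hq1 (norm_nonneg _) (by positivity)
          exact mul_le_mul hq1 (hj x hx) (norm_nonneg _) zero_le_one
        have n2 : ‖(a * (1 - p)) * Ψ (x * x) * (1 - p)‖ ≤ t * (M * (‖x‖ * ‖x‖)) * 1 := by
          refine (norm_mul_le _ _).trans ?_
          refine mul_le_mul ((norm_mul_le _ _).trans ?_) hq1 (norm_nonneg _) (by positivity)
          refine mul_le_mul hat ((hΨ _).trans ?_) (norm_nonneg _) ht
          gcongr; exact norm_mul_le _ _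
        refine (norm_add_le _ _).trans ((add_le_add n1 n2).trans ?_)
        nlinarith [sq_nonneg ‖x‖]
      have h2 : ‖(1 - p) * Ψ x‖ ≤ r * ‖x‖ := by
        rw [← norm_star, star_mul, hy]; simpa [hp] using h1
      have e : Ψ x - p * Ψ x * p = Ψ x * (1 - p) + ((1 - p) * Ψ x) * p := by noncomm_ring
      rw [e]
      refine (norm_add_le _ _).trans ?_
      have h3 : ‖((1 - p) * Ψ x) * p‖ ≤ r * ‖x‖ * 1 :=
        (norm_mul_le _ _).trans (mul_le_mul h2 hp1 (norm_nonneg _) (by positivity))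
      linarith
    intro x
    obtain ⟨u, v, hu, hv, hun, hvn, hx⟩ := jz_decomp x
    have e : Ψ x - p * Ψ x * p = (Ψ u - p * Ψ u * p) + Complex.I • (Ψ v - p * Ψ v * p) := by
      rw [hx]
      simp only [map_add, map_smul, mul_add, add_mul, smul_mul_assoc, mul_smul_comm, smul_sub]
      abel
    rw [e]
    refine (norm_add_le _ _).trans ?_
    rw [norm_smul, Complex.norm_I, one_mul]
    have h1 := sa u hu
    have h2 := sa v hv
    have h1' : 2 * r * ‖u‖ ≤ 2 * r * ‖x‖ := by gcongr
    have h2' : 2 * r * ‖v‖ ≤ 2 * r * ‖x‖ := by gcongr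
    linarith
  · intro x
    have e : c * (p * Ψ (star x) * p) - star (c * (p * Ψ x * p))
        = -(c * (a * Ψ (star x) - Ψ (star x) * a) * c) := by
      rw [star_mul, star_mul, star_mul, hp, hcs, ← hstar]
      set y := Ψ (star x)
      calc _ = (c * p) * y * p - p * y * (p * c) := by noncomm_ring
        _ = c * y * (a * c) - (c * a) * y * c := by rw [hcp, hpc, hac, hca]
        _ = _ := by noncomm_ring
    rw [e, norm_neg]
    have := hc (star x)
    rw [norm_star] at this
    calc _ ≤ ‖c‖ * (256 * ε * ‖x‖) * ‖c‖ := by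
          refine (norm_mul_le _ _).trans ?_
          gcongr
          refine (norm_mul_le _ _).trans ?_
          gcongr
      _ = _ := by ring
  · intro x
    set y := Ψ x with hy
    set z := Ψ (x * x)
    set v := p * y * (1 - p) with hv
    have hD := hc x
    have hvn : ‖v‖ ≤ 256 * ε / g * ‖x‖ := by
      have e : v = c * (a * y - y * a) * (1 - p) + c * v * (a * (1 - p)) := by
        have : c * v * (a * (1 - p)) = c * y * (a * (1 - p)) := by
          calc _ = (c * p) * y * ((1 - p) * a) * (1 - p) := by rw [hv]; noncomm_ring
            _ = c * y * a * ((1 - p) * (1 - p)) := by rw [hcp, hqa]; noncomm_ring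
            _ = _ := by rw [hqq]; noncomm_ring
        rw [this]
        calc v = (c * a) * y * (1 - p) := by rw [hca]
          _ = _ := by noncomm_ring
      have n0 : ‖v‖ ≤ ‖c‖ * (256 * ε * ‖x‖) * 1 + ‖c‖ * ‖v‖ * t := by
        conv_lhs => rw [e]
        refine (norm_add_le _ _).trans (add_le_add ?_ ?_)
        · refine (norm_mul_le _ _).trans ?_
          refine mul_le_mul ((norm_mul_le _ _).trans ?_) hq1 (norm_nonneg _) (by positivity)
          gcongr
        · refine (norm_mul_le _ _).trans ?_
          refine mul_le_mul (norm_mul_le _ _) hat (norm_nonneg _) (by positivity)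
      have n1 : ‖c‖ * (g * ‖v‖) ≤ ‖c‖ * (256 * ε * ‖x‖) := by
        nlinarith [norm_nonneg v]
      rw [div_mul_eq_mul_div, le_div_iff₀ hg, mul_comm]
      rcases (norm_nonneg c).eq_or_lt with h0 | h0
      · rw [← h0] at n0
        have : ‖v‖ = 0 := le_antisymm (by simpa using n0) (norm_nonneg _)
        rw [this]; simp; positivity
      · exact le_of_mul_le_mul_left n1 h0
    have e : (c * (p * y * p)) * (c * (p * y * p)) - c * (p * z * p) =
        c * c * (a * y - y * a) * c * y * p - c * c * v * y * p + c * c * (y * y - a * z) * p := by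
      have l : (c * (p * y * p)) * (c * (p * y * p)) - c * (p * z * p) = c * y * c * y * p - c * z * p := by
        calc _ = (c * p) * y * (p * c) * p * y * p - (c * p) * z * p := by noncomm_ring
          _ = c * y * c * p * y * p - c * z * p := by rw [hcp, hpc]
          _ = c * y * (c * p) * y * p - c * z * p := by noncomm_ring
          _ = _ := by rw [hcp]
      have r1 : c * c * (a * y - y * a) * c * y * p = c * y * c * y * p - c * c * y * p * y * p := by
        calc _ = c * (c * a) * y * c * y * p - c * c * y * (a * c) * y * p := by noncomm_ring
          _ = _ := by rw [hca, hac, hcp]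
      have r2 : c * c * v * y * p = c * c * y * y * p - c * c * y * p * y * p := by
        calc _ = c * (c * p) * y * y * p - c * (c * p) * y * p * y * p := by rw [hv]; noncomm_ring
          _ = _ := by rw [hcp]
      have r3 : c * c * (y * y - a * z) * p = c * c * y * y * p - c * z * p := by
        calc _ = c * c * y * y * p - c * (c * a) * z * p := by noncomm_ring
          _ = _ := by rw [hca, hcp]
      rw [l, r1, r2, r3]; abel
    rw [e]
    have hyn : ‖y‖ ≤ M * ‖x‖ := hΨ x
    have hJ := hj' x
    have m1 : ‖c * c * (a * y - y * a) * c * y * p‖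
        ≤ ‖c‖ * ‖c‖ * (256 * ε * ‖x‖) * ‖c‖ * (M * ‖x‖) * 1 := by
      refine norm_mul_le_of_le (norm_mul_le_of_le (norm_mul_le_of_le (norm_mul_le_of_le
        (norm_mul_le_of_le le_rfl le_rfl) hD) le_rfl) hyn) hp1
    have m2 : ‖c * c * v * y * p‖ ≤ ‖c‖ * ‖c‖ * (256 * ε / g * ‖x‖) * (M * ‖x‖) * 1 := by
      refine norm_mul_le_of_le (norm_mul_le_of_le (norm_mul_le_of_le
        (norm_mul_le_of_le le_rfl le_rfl) hvn) hyn) hp1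
    have m3 : ‖c * c * (y * y - a * z) * p‖ ≤ ‖c‖ * ‖c‖ * (1024 * ε * ‖x‖ ^ 2) * 1 := by
      refine norm_mul_le_of_le (norm_mul_le_of_le (norm_mul_le_of_le le_rfl le_rfl) hJ) hp1
    refine (norm_add_le _ _).trans ?_
    refine (add_le_add (norm_sub_le _ _) le_rfl).trans ?_
    refine (add_le_add (add_le_add m1 m2) m3).trans (le_of_eq ?_)
    ring

theorem jz_gap (F : Finset ℝ) (N : ℕ) (hF : F.card ≤ N) (τ : ℝ) (hτ : 0 < τ) :
    ∃ t, τ ≤ t ∧ t ≤ 2 * τ ∧ ∀ s ∈ F, t < |s| → t + τ / (N + 1) < |s| := by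
  have hN : (0:ℝ) < N + 1 := by positivity
  set g := τ / (N + 1) with hg
  have hg0 : 0 < g := by positivity
  have hgN : (N + 1) * g = τ := by rw [hg]; field_simp
  by_contra hcon
  push Not at hcon
  have hk : ∀ k : Fin (N + 1), ∃ s ∈ F, τ + (k:ℕ) * g < |s| ∧ |s| ≤ τ + (k:ℕ) * g + g := by
    intro k
    have : ((k : ℕ) : ℝ) ≤ N := by exact_mod_cast Nat.lt_succ_iff.1 k.2
    have h0 : 0 ≤ ((k : ℕ) : ℝ) * g := by positivity
    exact hcon _ (by linarith) (by nlinarith)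
  choose f hf1 hf2 hf3 using hk
  have hinj : Function.Injective f := by
    have aux : ∀ k l : Fin (N + 1), k < l → f k ≠ f l := by
      intro k l hkl h
      have h1 := hf3 k
      have h2 := hf2 l
      rw [h] at h1
      have : ((k : ℕ) : ℝ) + 1 ≤ (l : ℕ) := by exact_mod_cast hkl
      nlinarith
    intro k l h
    rcases lt_trichotomy k l with h1 | h1 | h1
    · exact absurd h (aux _ _ h1)
    · exact h1
    · exact absurd h.symm (aux _ _ h1)
  have := Finset.card_le_card_of_injOn f (s := Finset.univ) (t := F) (fun k _ => hf1 k) hinj.injOn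
  simp at this
  omega

theorem jz_spec {R : Type*} [CStarAlgebra R] (a : R) (ha : IsSelfAdjoint a) (F : Finset ℝ) (N : ℕ)
    (hF : F.card ≤ N) (hspec : spectrum ℝ a ⊆ F) (τ : ℝ) (hτ : 0 < τ) :
    ∃ t p c, τ ≤ t ∧ t ≤ 2 * τ ∧ star p = p ∧ p * p = p ∧ star c = c ∧ c * p = c ∧ p * c = c ∧
      c * a = p ∧ a * c = p ∧ p * a = a * p ∧ ‖c‖ * (t + τ / (N + 1)) ≤ 1 ∧ ‖a * (1 - p)‖ ≤ t ∧
      (∀ b, Commute a b → Commute p b) ∧ (∀ b, Commute a b → Commute c b) := by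
  obtain ⟨t, ht1, ht2, ht3⟩ := jz_gap F N hF τ hτ
  have ht0 : 0 < t := by linarith
  have hcont : ∀ f : ℝ → ℝ, ContinuousOn f (spectrum ℝ a) := fun f =>
    ((Finset.finite_toSet F).subset hspec).continuousOn f
  set fp : ℝ → ℝ := fun s => if t < |s| then 1 else 0 with hfp
  set fc : ℝ → ℝ := fun s => if t < |s| then s⁻¹ else 0 with hfc
  have hmul : ∀ f g k : ℝ → ℝ, (∀ s, f s * g s = k s) → cfc f a * cfc g a = cfc k a := by
    intro f g k h
    rw [← cfc_mul f g a (hcont f) (hcont g)]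
    congr 1; funext s; exact h s
  have hca : ∀ s, fc s * s = fp s := by
    intro s
    simp only [hfp, hfc]
    split_ifs with h
    · have : s ≠ 0 := by rintro rfl; simp at h; linarith
      field_simp
    · simp
  have hid : cfc (fun s : ℝ => s) a = a := cfc_id' ℝ a
  have e1 : cfc fc a * a = cfc fp a := by
    have := hmul fc (fun s => s) fp hca
    rwa [hid] at this
  have e2 : a * cfc fc a = cfc fp a := by
    have := hmul (fun s => s) fc fp (fun s => by rw [mul_comm]; exact hca s)
    rwa [hid] at this
  refine ⟨t, cfc fp a, cfc fc a, ht1, ht2, (cfc_predicate fp a : IsSelfAdjoint _).star_eq, ?_,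
    (cfc_predicate fc a : IsSelfAdjoint _).star_eq, ?_, ?_, e1, e2, ?_, ?_, ?_, ?_, ?_⟩
  · exact hmul _ _ _ (fun s => by simp [hfp])
  · exact hmul _ _ _ (fun s => by simp only [hfp, hfc]; split_ifs <;> simp)
  · exact hmul _ _ _ (fun s => by simp only [hfp, hfc]; split_ifs <;> simp)
  · exact (Commute.refl a).cfc_real fp
  · have hg : 0 < t + τ / (N + 1) := by positivity
    rw [← le_div_iff₀ hg]
    refine norm_cfc_le (by positivity) fun s hs => ?_
    simp only [hfc]
    split_ifs with h
    · have := ht3 s (hspec hs) h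
      rw [norm_inv, Real.norm_eq_abs, one_div]
      exact inv_anti₀ hg this.le
    · simp; positivity
  · have : a * (1 - cfc fp a) = cfc (fun s => s * (1 - fp s)) a := by
      rw [cfc_mul (fun s : ℝ => s) (fun s => 1 - fp s) a (hcont _) (hcont _),
        cfc_sub (fun _ => 1) fp a (hcont _) (hcont _), hid, cfc_const_one ℝ a]
    rw [this]
    refine norm_cfc_le ht0.le fun s hs => ?_
    simp only [hfp]
    split_ifs with h
    · simp; linarith
    · simp; linarith
  · intro b hb; exact hb.cfc_real fp
  · intro b hb; exact hb.cfc_real fc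

theorem jz_finspec {R : Type*} [CStarAlgebra R] (a : R) (Q : Polynomial ℂ) (hQ : Q.Monic) (N : ℕ)
    (hN : Q.natDegree ≤ N) (h : Polynomial.aeval a Q = 0) :
    ∃ F : Finset ℝ, F.card ≤ N ∧ spectrum ℝ a ⊆ F := by
  classical
  refine ⟨Q.roots.toFinset.image Complex.re, ?_, ?_⟩
  · refine Finset.card_image_le.trans ((Multiset.toFinset_card_le _).trans ?_)
    exact (Polynomial.card_roots' Q).trans hN
  · intro s hs
    have h1 : (s : ℂ) ∈ spectrum ℂ a := spectrum.algebraMap_mem ℂ hs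
    have h2 := spectrum.subset_polynomial_aeval a Q ⟨_, h1, rfl⟩
    rw [h] at h2
    have h3 : Polynomial.eval (s : ℂ) Q = 0 := by
      rcases subsingleton_or_nontrivial R with hR | hR
      · exact absurd h2 (by simp [spectrum.of_subsingleton])
      · simpa [spectrum.zero_eq] using h2
    simp only [Finset.coe_image, Set.mem_image, Finset.mem_coe, Multiset.mem_toFinset]
    exact ⟨s, (Polynomial.mem_roots hQ.ne_zero).2 h3, by simp⟩

/-- There exist an absolute constant `K` and constants `C_N` (`N ∈ ℕ`) such
that every self-adjoint ε-order zero map `ψ : A → B` (`A` unital, `ε ∈ (0,1]`) whose value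
`h := ψ(1)` is algebraic of degree at most `N`, composed with a nondegenerate representation
`π` of `B` on a Hilbert space `H`, decomposes as `π∘ψ = ψ_s + ψ_r` with `ψ_s, ψ_r` taking
values in `π(B)''`, `‖ψ_s‖ ≤ (6K+7)‖ψ‖^{4/5}ε^{1/16}`, `ψ_r` taking values in a corner
`q·D·q` of the hereditary subalgebra `D = closure(π(h)·π(B)''·π(h))`, and either `ψ_r = 0` or
`ψ_r(1)` invertible in the corner with `x ↦ ψ_r(1)⁻¹ψ_r(x)` a unital δ-Jordan
*-homomorphism, `δ = 24(C_N²(K+2)⁵ + 10C_N + 17)‖ψ‖ε^{1/16}`. -/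
theorem stmt_18 :
    ∃ K : ℝ, ∃ C : ℕ → ℝ, ∀ N : ℕ,
    ∀ (A B H : Type) (_ : CStarAlgebra A) (_ : PartialOrder A) (_ : StarOrderedRing A)
      (_ : NonUnitalCStarAlgebra B) (_ : NormedAddCommGroup H) (_ : InnerProductSpace ℂ H)
      (_ : CompleteSpace H)
      (π : B →⋆ₙₐ[ℂ] (H →L[ℂ] H)),
      (Submodule.span ℂ {v : H | ∃ (b : B) (ξ : H), v = π b ξ}).topologicalClosure = ⊤ →
    ∀ ε : ℝ, 0 < ε → ε ≤ 1 →
    ∀ ψ : A →L[ℂ] B, (∀ x : A, ψ (star x) = star (ψ x)) → IsEpsOrderZero ε ψ →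
    ∀ h : B, h = ψ 1 →
    (∃ Q : Polynomial ℂ, Q.Monic ∧ Q.natDegree ≤ N ∧
      Polynomial.aeval (h : Unitization ℂ B) Q = 0) →
    ∃ ψs ψr : A →L[ℂ] (H →L[ℂ] H),
      (∀ x : A, ψs x ∈ doubleCommutant (Set.range (⇑π))) ∧
      (∀ x : A, ψr x ∈ doubleCommutant (Set.range (⇑π))) ∧
      (∀ x : A, π (ψ x) = ψs x + ψr x) ∧
      ‖ψs‖ ≤ (6 * K + 7) * ‖ψ‖ ^ ((4 : ℝ) / 5) * ε ^ ((1 : ℝ) / 16) ∧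
      ∃ q : H →L[ℂ] H, q ∈ doubleCommutant (Set.range (⇑π)) ∧
        IsSelfAdjoint q ∧ q * q = q ∧
        (∀ x : A, ψr x ∈ cornerSet q
          (closure {y : H →L[ℂ] H |
            ∃ b ∈ doubleCommutant (Set.range (⇑π)), y = π h * b * π h})) ∧
        (ψr = 0 ∨
          ∃ c : H →L[ℂ] H,
            c ∈ cornerSet q
              (closure {y : H →L[ℂ] H |
                ∃ b ∈ doubleCommutant (Set.range (⇑π)), y = π h * b * π h}) ∧
            c * ψr 1 = q ∧ ψr 1 * c = q ∧
            (∀ x : A, ‖c * ψr (star x) - star (c * ψr x)‖ ≤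
              24 * ((C N) ^ 2 * (K + 2) ^ 5 + 10 * C N + 17) * ‖ψ‖ * ε ^ ((1 : ℝ) / 16)
                * ‖x‖) ∧
            (∀ x : A, ‖(c * ψr x) * (c * ψr x) - c * ψr (x * x)‖ ≤
              24 * ((C N) ^ 2 * (K + 2) ^ 5 + 10 * C N + 17) * ‖ψ‖ * ε ^ ((1 : ℝ) / 16)
                * ‖x‖ ^ 2)) := by
  refine ⟨8, fun N => 2000 + 256 * N, ?_⟩
  intro N A B H _ _ _ _ _ _ _ π _ ε hε0 hε1 ψ hψs hoz h hh ⟨Q, hQm, hQd, hQ0⟩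
  have hπn : ∀ b, ‖π b‖ ≤ ‖b‖ := fun b => NonUnitalStarAlgHom.norm_apply_le π b
  let Pl : A →ₗ[ℂ] (H →L[ℂ] H) := (π : B →ₗ[ℂ] (H →L[ℂ] H)) ∘ₗ (ψ : A →ₗ[ℂ] B)
  have hPl : ∀ x, Pl x = π (ψ x) := fun x => rfl
  have hPcb : ∀ x, ‖Pl x‖ ≤ ‖ψ‖ * ‖x‖ := fun x => (hπn _).trans (ψ.le_opNorm x)
  let Pc : A →L[ℂ] (H →L[ℂ] H) := Pl.mkContinuous ‖ψ‖ hPcb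
  have hPc : ∀ x, Pc x = π (ψ x) := fun x => rfl
  -- `π(B)''` contains `π(B)` and is closed under products and differences
  have hBdc : ∀ b, π b ∈ doubleCommutant (Set.range (⇑π)) := fun b =>
    Set.subset_centralizer_centralizer ⟨b, rfl⟩
  have hmuldc : ∀ u v, u ∈ doubleCommutant (Set.range (⇑π)) → v ∈ doubleCommutant (Set.range (⇑π)) →
      u * v ∈ doubleCommutant (Set.range (⇑π)) := fun u v hu hv => Set.mul_mem_centralizer hu hv
  have hzdc : (0 : H →L[ℂ] H) ∈ doubleCommutant (Set.range (⇑π)) := Set.zero_mem_centralizer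
  obtain ⟨m, hm0, hm5, hm4⟩ : ∃ m : ℝ, 0 ≤ m ∧ m ^ 5 = ‖ψ‖ ∧ m ^ 4 = ‖ψ‖ ^ ((4 : ℝ) / 5) := by
    refine ⟨‖ψ‖ ^ ((1 : ℝ) / 5), by positivity, ?_, ?_⟩
    · rw [← Real.rpow_natCast, ← Real.rpow_mul (norm_nonneg _)]; norm_num
    · rw [← Real.rpow_natCast, ← Real.rpow_mul (norm_nonneg _)]; norm_num
  obtain ⟨e, he0, he1, he16, hee⟩ : ∃ e : ℝ, 0 < e ∧ e ≤ 1 ∧ e ^ 16 = ε ∧ e = ε ^ ((1 : ℝ) / 16) := by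
    refine ⟨ε ^ ((1 : ℝ) / 16), by positivity, Real.rpow_le_one hε0.le hε1 (by norm_num), ?_, rfl⟩
    rw [← Real.rpow_natCast, ← Real.rpow_mul hε0.le]; norm_num
  rw [← hee, ← hm4]
  rcases le_or_gt m (55 * e) with hsmall | hbig
  · -- trivial regime
    refine ⟨Pc, 0, fun x => hBdc _, fun x => hzdc, fun x => by simp [hPc], ?_, 0, hzdc,
      IsSelfAdjoint.zero _, by simp, ?_, Or.inl rfl⟩
    · refine (Pl.mkContinuous_norm_le (norm_nonneg _) hPcb).trans ?_
      rw [← hm5]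
      have : 0 ≤ m ^ 4 := by positivity
      nlinarith
    · intro x
      exact ⟨0, subset_closure ⟨0, hzdc, by simp⟩, by simp⟩
  · have hem : e ≤ m := by linarith
    have hmpos : 0 < m := by linarith
    set τ := m ^ 3 * e ^ 2 with hτ
    have hτ0 : 0 < τ := by positivity
    have hastar : IsSelfAdjoint (π h) := by
      rw [isSelfAdjoint_iff, ← map_star, hh, ← hψs, star_one]
    have hQa : Polynomial.aeval (π h) Q = 0 := by
      have h1 := congrArg (Unitization.lift π.toNonUnitalAlgHom) hQ0
      rw [map_zero, ← Polynomial.aeval_algHom_apply] at h1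
      have h2 : Unitization.lift π.toNonUnitalAlgHom (h : Unitization ℂ B) = π h := by
        have h3 := Unitization.lift_symm_apply_apply (Unitization.lift π.toNonUnitalAlgHom) h
        rw [Equiv.symm_apply_apply] at h3
        exact h3.symm
      rwa [h2] at h1
    obtain ⟨F, hF1, hF2⟩ := jz_finspec (π h) Q hQm N hQd hQa
    obtain ⟨t, p, c, ht1, ht2, hp, hpp, hcs, hcp, hpc, hca, hac, hpa, hcn, hat, hpcomm, hccomm⟩ :=
      jz_spec (π h) hastar F N hF1 hF2 τ hτ0
    have hg0 : 0 < τ / ((N : ℝ) + 1) := by positivity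
    have hdc : ∀ d, (∀ b, Commute (π h) b → Commute d b) →
        d ∈ doubleCommutant (Set.range (⇑π)) := by
      intro d hd
      rw [doubleCommutant, Set.mem_centralizer_iff]
      intro b hb
      exact (hd b (hb _ ⟨h, rfl⟩)).symm
    have hpdc := hdc p hpcomm
    have hcdc := hdc c hccomm
    obtain ⟨R1, R2, R3⟩ := jz_corner Pl (fun x => by rw [hPl, hPl, hψs, map_star]) ‖ψ‖ ε
      (norm_nonneg _) hε0.le hPcb (π h)
      (fun x hx => by
        rw [hPl, hPl, ← map_mul π, ← map_mul π, ← map_sub π, hh]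
        exact (hπn _).trans (jz_alg1 ε hε0.le ψ hoz x hx).1)
      (fun x => by
        rw [hPl, hPl, ← map_mul π, ← map_mul π, ← map_sub π, hh]
        exact (hπn _).trans (jz_alg2 ε hε0.le ψ hoz x).1)
      (fun x => by
        rw [hPl, ← map_mul π, ← map_mul π, ← map_sub π, hh]
        exact (hπn _).trans (jz_alg2 ε hε0.le ψ hoz x).2)
      p c t (τ / (N + 1)) (by linarith) hg0 hp hpp hcs hcp hpc hca hac hpa hcn hat
    let ψr : A →L[ℂ] (H →L[ℂ] H) := (ContinuousLinearMap.mulLeftRight ℂ (H →L[ℂ] H) p p).comp Pc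
    have hψr : ∀ x, ψr x = p * Pl x * p := fun x => rfl
    have hψrdc : ∀ x, ψr x ∈ doubleCommutant (Set.range (⇑π)) := fun x =>
      hmuldc _ _ (hmuldc _ _ hpdc (hBdc _)) hpdc
    set u := τ⁻¹ with hu
    have hu0 : 0 < u := by positivity
    have huτ : u * (m ^ 3 * e ^ 2) = 1 := inv_mul_cancel₀ hτ0.ne'
    have hcu : ‖c‖ ≤ u := by
      rw [hu, ← one_div, le_div_iff₀ hτ0]
      refine le_trans ?_ hcn
      exact mul_le_mul_of_nonneg_left (by linarith) (norm_nonneg _)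
    have E2 : u ^ 2 * e ^ 16 ≤ m ^ 5 * e := by
      have : e ^ 11 ≤ m ^ 11 := by gcongr
      calc u ^ 2 * e ^ 16 = u ^ 2 * e ^ 5 * e ^ 11 := by ring
        _ ≤ u ^ 2 * e ^ 5 * m ^ 11 := by gcongr
        _ = (u * (m ^ 3 * e ^ 2)) ^ 2 * (m ^ 5 * e) := by ring
        _ = m ^ 5 * e := by rw [huτ]; ring
    have E3 : u ^ 3 * (e ^ 16 * m ^ 5) ≤ m ^ 5 * e := by
      have : e ^ 9 ≤ m ^ 9 := by gcongr
      calc u ^ 3 * (e ^ 16 * m ^ 5) = u ^ 3 * e ^ 7 * m ^ 5 * e ^ 9 := by ring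
        _ ≤ u ^ 3 * e ^ 7 * m ^ 5 * m ^ 9 := by gcongr
        _ = (u * (m ^ 3 * e ^ 2)) ^ 3 * (m ^ 5 * e) := by ring
        _ = m ^ 5 * e := by rw [huτ]; ring
    have hc2 : ‖c‖ ^ 2 ≤ u ^ 2 := by gcongr
    have hc3 : ‖c‖ ^ 3 ≤ u ^ 3 := by gcongr
    have hX : 0 ≤ m ^ 5 * e := by positivity
    have hNn : (0:ℝ) ≤ N := Nat.cast_nonneg N
    have hD : (256 + 256 * (N + 1) + 1024) * (m ^ 5 * e) ≤
        24 * ((2000 + 256 * (N:ℝ)) ^ 2 * (8 + 2) ^ 5 + 10 * (2000 + 256 * (N:ℝ)) + 17)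
          * ‖ψ‖ * e := by
      rw [← hm5, mul_assoc _ (m ^ 5) e]
      refine mul_le_mul_of_nonneg_right ?_ hX
      nlinarith [sq_nonneg (2000 + 256 * (N:ℝ))]
    refine ⟨Pc - ψr, ψr, ?_, hψrdc, fun x => by simp [hPc], ?_, p, hpdc, hp, hpp, ?_, Or.inr ⟨c, ?_, ?_, ?_, ?_, ?_⟩⟩
    · intro x
      have h1 : Pc x - ψr x = Pc x + -(ψr x) := sub_eq_add_neg _ _
      rw [ContinuousLinearMap.sub_apply, h1]
      exact Set.add_mem_centralizer (hBdc _) (Set.neg_mem_centralizer (hψrdc x))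
    · refine ContinuousLinearMap.opNorm_le_bound _ (by positivity) fun x => ?_
      have := R1 (12 * (m ^ 4 * e)) (by positivity) (by
        rw [← hm5, ← he16]
        have a1 : t * m ^ 5 ≤ 2 * τ * m ^ 5 := by gcongr
        have a2 : e ^ 8 ≤ m ^ 8 := by gcongr
        have a3 : e ^ 16 ≤ m ^ 8 * e ^ 2 := by
          calc e ^ 16 = e ^ 8 * e ^ 8 := by ring
            _ ≤ m ^ 8 * e ^ 2 := mul_le_mul a2 (pow_le_pow_of_le_one he0.le he1 (by norm_num))
                (by positivity) (by positivity)
        have a4 : 0 ≤ m ^ 8 * e ^ 2 := by positivity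
        have a5 : 2 * τ * m ^ 5 = 2 * (m ^ 8 * e ^ 2) := by rw [hτ]; ring
        have a6 : (12 * (m ^ 4 * e)) ^ 2 = 144 * (m ^ 8 * e ^ 2) := by ring
        rw [a6]
        linarith) x
      refine le_trans this ?_
      refine mul_le_mul_of_nonneg_right ?_ (norm_nonneg _)
      have : 0 ≤ m ^ 4 * e := by positivity
      linarith
    · intro x
      refine ⟨ψr x, subset_closure ⟨c * Pl x * c,
        hmuldc _ _ (hmuldc _ _ hcdc (hBdc _)) hcdc, ?_⟩, ?_⟩
      · rw [hψr]
        calc p * Pl x * p = (π h * c) * Pl x * (c * π h) := by rw [hca, hac]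
          _ = _ := by simp only [mul_assoc]
      · rw [hψr]
        calc p * Pl x * p = (p * p) * Pl x * (p * p) := by rw [hpp]
          _ = _ := by simp only [mul_assoc]
    · refine ⟨c, subset_closure ⟨c * c * c, hmuldc _ _ (hmuldc _ _ hcdc hcdc) hcdc, ?_⟩, ?_⟩
      · calc c = (p * c) * p := by rw [hpc, hcp]
          _ = ((π h * c) * c) * (c * π h) := by rw [hca, hac]
          _ = _ := by simp only [mul_assoc]
      · rw [hpc, hcp]
    · rw [hψr, hPl, ← hh]
      calc c * (p * π h * p) = (c * p) * π h * p := by simp only [mul_assoc]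
        _ = p := by rw [hcp, hca, hpp]
    · rw [hψr, hPl, ← hh]
      calc p * π h * p * c = p * (π h * (p * c)) := by simp only [mul_assoc]
        _ = p := by rw [hpc, hac, hpp]
    · intro x
      refine (R2 x).trans ?_
      refine mul_le_mul_of_nonneg_right ?_ (norm_nonneg _)
      refine le_trans ?_ hD
      calc ‖c‖ ^ 2 * (256 * ε) ≤ u ^ 2 * (256 * ε) := by gcongr
        _ = 256 * (u ^ 2 * e ^ 16) := by rw [he16]; ring
        _ ≤ 256 * (m ^ 5 * e) := by gcongr
        _ ≤ _ := by gcongr; linarith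
    · intro x
      refine (R3 x).trans ?_
      refine mul_le_mul_of_nonneg_right ?_ (by positivity)
      refine le_trans ?_ hD
      have hgu : 256 * ε / (τ / (N + 1)) * ‖ψ‖ = 256 * (N + 1) * u * (e ^ 16 * m ^ 5) := by
        rw [hm5, he16, hu]; field_simp
      rw [hgu]
      have b1 : ‖c‖ ^ 3 * (256 * ε * ‖ψ‖) ≤ 256 * (m ^ 5 * e) := by
        calc ‖c‖ ^ 3 * (256 * ε * ‖ψ‖) ≤ u ^ 3 * (256 * ε * ‖ψ‖) := by gcongr
          _ = 256 * (u ^ 3 * (e ^ 16 * m ^ 5)) := by rw [he16, hm5]; ring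
          _ ≤ _ := by gcongr
      have b2 : ‖c‖ ^ 2 * (256 * (N + 1) * u * (e ^ 16 * m ^ 5)) ≤ 256 * (N + 1) * (m ^ 5 * e) := by
        calc _ ≤ u ^ 2 * (256 * (N + 1) * u * (e ^ 16 * m ^ 5)) := by gcongr
          _ = 256 * (N + 1) * (u ^ 3 * (e ^ 16 * m ^ 5)) := by ring
          _ ≤ _ := by gcongr
      have b3 : ‖c‖ ^ 2 * (1024 * ε) ≤ 1024 * (m ^ 5 * e) := by
        calc _ ≤ u ^ 2 * (1024 * ε) := by gcongr
          _ = 1024 * (u ^ 2 * e ^ 16) := by rw [he16]; ring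
          _ ≤ _ := by gcongr
      linarith
end
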